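/- arXiv:math/0501524 — 2 statements merged into one kernel-verified Lean document; each statement's English description precedes it below -/
import Mathlib

section
/- There is a function f : [ω₁]² → ω₁ such that whenever A, B ⊆ ω₁ are uncountable and ξ < ω₁, there exist α ∈ A and β ∈ B with α < β and f(α,β) = ξ. (In particular the partition relation ω₁ → (ω₁;ω₁)²₂ fails.) -/
/-- The first uncountable ordinal. -/
noncomputable def omega1 : Ordinal := (Cardinal.aleph 1).ord

/-!
The coloring is built from minimal walks along a C-sequence. The walk from `β` to `α` yields a
finite set, the lower trace `L(α, β) ⊆ α`, and Todorcevic's function `ρ₁`, which is finite-to-one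
in its lower argument and coherent: `ρ₁(·, α)` and `ρ₁(·, β)` differ at finitely many places only.
The oscillation `osc(α, β)` counts the changes from `ρ₁(·, α) ≤ ρ₁(·, β)` to
`ρ₁(·, α) > ρ₁(·, β)` along `L(α, β)`.

Let `δ` be a limit reflecting enough of the structure, and let `(a, b) ∈ A × B` lie above `δ`. By
reflection and coherence, the pair can be changed so that `L(δ, b)` acquires a further block on
which `ρ₁(·, a)` and `ρ₁(·, b)` agree; since `ρ₁` is finite-to-one, `a` can then be changed again so
that `ρ₁(·, a)` is the larger one on this block. Alternating the two moves raises the oscillation by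
one each time. A single `α ∈ A` below `δ`, close to `δ` and imitating the last `a`, contributes the
same further amount to all these oscillations, so on `A × B` they fill arbitrarily long intervals.

An interval of length `2 ^ (k + 1) + 2 ^ k` contains a number of 2-adic valuation `k`, so the
2-adic valuation of `osc` takes all values in `ℕ`. Feeding it into an enumeration of the ordinals
below `β`, and shrinking `B` so that `ξ` always has the same index, gives all values in `ω₁`.
-/

namespace MooreOscillation

open Set Order

section Falls

/-- The number of places where `true` is immediately followed by `false` in the word `s :: w`. -/
def fallCount : Bool → List Bool → ℕ
  | _, [] => 0
  | s, x :: w => (if s && !x then 1 else 0) + fallCount x w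

theorem fallCount_append (s : Bool) (w w' : List Bool) :
    fallCount s (w ++ w') = fallCount s w + fallCount (w.getLastD s) w' := by
  induction w generalizing s with
  | nil => simp [fallCount]
  | cons x w ih => rw [List.cons_append, fallCount, fallCount, ih, List.getLastD_cons, add_assoc]

theorem fallCount_replicate_true (s : Bool) (n : ℕ) :
    fallCount s (List.replicate n true) = 0 := by
  induction n generalizing s with
  | zero => rfl
  | succ n ih => simp [List.replicate_succ, fallCount, ih]

theorem fallCount_false_replicate_false (n : ℕ) :
    fallCount false (List.replicate n false) = 0 := by
  induction n with
  | zero => rfl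
  | succ n ih => simp [List.replicate_succ, fallCount, ih]

theorem fallCount_true_replicate_false {n : ℕ} (hn : n ≠ 0) :
    fallCount true (List.replicate n false) = 1 := by
  obtain ⟨n, rfl⟩ := Nat.exists_eq_succ_of_ne_zero hn
  simp [List.replicate_succ, fallCount, fallCount_false_replicate_false]

theorem getLastD_append_replicate (w : List Bool) (s x : Bool) {n : ℕ} (hn : n ≠ 0) :
    (w ++ List.replicate n x).getLastD s = x := by
  rw [List.getLastD_eq_getLast?, List.getLast?_append, List.getLast?_replicate, if_neg hn,
    Option.some_or, Option.getD_some]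

variable {ι : Type*} {f g f' g' : ι → ℕ} {l : List ι}

/-- The word recording, along the list `l`, where `f ≤ g` holds. -/
def comparison (f g : ι → ℕ) (l : List ι) : List Bool :=
  l.map fun i => decide (f i ≤ g i)

theorem comparison_append (f g : ι → ℕ) (l l' : List ι) :
    comparison f g (l ++ l') = comparison f g l ++ comparison f g l' :=
  List.map_append

theorem comparison_congr (hf : ∀ i ∈ l, f i = f' i) (hg : ∀ i ∈ l, g i = g' i) :
    comparison f g l = comparison f' g' l :=
  List.map_congr_left fun i hi => by rw [hf i hi, hg i hi]

theorem comparison_eq_replicate_true (h : ∀ i ∈ l, f i ≤ g i) :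
    comparison f g l = List.replicate l.length true :=
  List.map_eq_replicate_iff.2 fun i hi => decide_eq_true (h i hi)

theorem comparison_eq_replicate_false (h : ∀ i ∈ l, g i < f i) :
    comparison f g l = List.replicate l.length false :=
  List.map_eq_replicate_iff.2 fun i hi => decide_eq_false (h i hi).not_ge

end Falls

/-- A C-sequence: to each `β` it attaches a subset of `Iio β` that is cofinal in it and has finite
proper initial segments. -/
structure CSequence (W : Type*) [Preorder W] where
  /-- The set attached to `β`, usually written `C_β`. -/
  ladder : W → Set W
  ladder_subset_Iio (β : W) : ladder β ⊆ Iio β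
  finite_ladder_inter_Iio {α β : W} (h : α < β) : (ladder β ∩ Iio α).Finite
  nonempty_ladder_inter_Ici {α β : W} (h : α < β) : (ladder β ∩ Ici α).Nonempty

-- The ladder consists of the records of an enumeration of `Iio β`.
theorem exists_ladder {W : Type*} [LinearOrder W] {β : W} (hβ : (Iio β).Countable) :
    ∃ X ⊆ Iio β, ∀ α < β, (X ∩ Iio α).Finite ∧ (X ∩ Ici α).Nonempty := by
  rcases (Iio β).eq_empty_or_nonempty with hempty | hne
  · exact ⟨∅, empty_subset _, fun α hα => absurd (show α ∈ Iio β from hα) (by simp [hempty])⟩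
  obtain ⟨f, hf⟩ := hβ.exists_eq_range hne
  have f_lt (n : ℕ) : f n < β := by
    have : f n ∈ Iio β := hf ▸ mem_range_self n
    exact this
  refine ⟨f '' {n | ∀ m < n, f m < f n}, image_subset_iff.2 fun n _ => f_lt n, fun α hα => ?_⟩
  obtain ⟨k, rfl⟩ : α ∈ range f := hf ▸ hα
  constructor
  · refine ((finite_Iic k).image f).subset ?_
    rintro _ ⟨⟨n, hn, rfl⟩, hnk⟩
    exact mem_image_of_mem f (not_lt.1 fun hkn => lt_asymm (hn k hkn) hnk)
  · classical
    have hex : ∃ n, f k ≤ f n := ⟨k, le_rfl⟩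
    exact ⟨_, ⟨_, fun m hm => (not_le.1 (Nat.find_min hex hm)).trans_le (Nat.find_spec hex), rfl⟩,
      Nat.find_spec hex⟩

theorem nonempty_cSequence {W : Type*} [LinearOrder W] [∀ a : W, Countable (Iio a)] :
    Nonempty (CSequence W) := by
  choose X hX hXα using fun β : W => exists_ladder (Iio β).to_countable
  exact ⟨⟨X, hX, fun h => (hXα _ _ h).1, fun h => (hXα _ _ h).2⟩⟩

theorem csSup_lt_of_finite {W : Type*} [ConditionallyCompleteLinearOrderBot W] {δ : W}
    (hδ : ⊥ < δ) {X : Set W} (hX : X.Finite) (h : ∀ x ∈ X, x < δ) : sSup X < δ := by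
  rcases X.eq_empty_or_nonempty with rfl | hne
  · rwa [csSup_empty]
  · exact (hX.csSup_lt_iff hne).2 h

namespace CSequence

variable {W : Type*} [ConditionallyCompleteLinearOrderBot W] (C : CSequence W) {α β γ δ ξ : W}

section Walk

/-- The first step `min (C_β \ α)` of the walk from `β` down to `α`. -/
noncomputable def next (α β : W) : W := sInf (C.ladder β ∩ Ici α)

/-- The ordinal `max (C_β ∩ α)`, read as `⊥` when that set is empty. -/
noncomputable def prev (α β : W) : W := sSup (C.ladder β ∩ Iio α)

theorem next_le (hγ : γ ∈ C.ladder β) (h : α ≤ γ) : C.next α β ≤ γ :=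
  csInf_le (OrderBot.bddBelow _) ⟨hγ, h⟩

theorem le_prev (h : α < β) (hγ : γ ∈ C.ladder β) (hγα : γ < α) : γ ≤ C.prev α β :=
  le_csSup (C.finite_ladder_inter_Iio h).bddAbove ⟨hγ, hγα⟩

theorem prev_lt (hα : ⊥ < α) (h : α < β) : C.prev α β < α :=
  csSup_lt_of_finite hα (C.finite_ladder_inter_Iio h) fun _ hγ => hγ.2

theorem strictMonoOn_ncard_ladder_inter_Iio (β : W) :
    StrictMonoOn (fun c => (C.ladder β ∩ Iio c).ncard) (C.ladder β) := by
  intro c hc d hd hcd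
  refine ncard_lt_ncard ?_ (C.finite_ladder_inter_Iio (C.ladder_subset_Iio β hd))
  exact ⟨inter_subset_inter_right _ (Iio_subset_Iio hcd.le), fun h => lt_irrefl c (h ⟨hc, hcd⟩).2⟩

variable [WellFoundedLT W]

theorem next_mem (h : α < β) : C.next α β ∈ C.ladder β ∩ Ici α :=
  csInf_mem (C.nonempty_ladder_inter_Ici h)

theorem le_next (h : α < β) : α ≤ C.next α β := (C.next_mem h).2

theorem next_lt (h : α < β) : C.next α β < β := C.ladder_subset_Iio β (C.next_mem h).1

theorem ladder_inter_Iio_next (h : α < β) :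
    C.ladder β ∩ Iio (C.next α β) = C.ladder β ∩ Iio α := by
  ext γ
  refine and_congr_right fun hγ => ⟨fun hlt => ?_, fun hlt => hlt.trans_le (C.le_next h)⟩
  exact not_le.1 fun hle => (C.next_le hγ hle).not_gt hlt

end Walk

section LowerTrace

open Classical in
/-- Moore's lower trace `L(α, β)`, listed in increasing order: as the walk from `β` to `α` visits
`β = β₀ > β₁ > ⋯`, it consists of the running maxima of the ordinals `max (C_{β_i} ∩ α)`. -/
noncomputable def lowerTrace [WellFoundedLT W] (α β : W) : List W :=
  if _ : α < β then
    C.prev α β :: (lowerTrace α (C.next α β)).filter (fun ξ => C.prev α β < ξ)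
  else []
termination_by wellFounded_lt.wrap β
decreasing_by exact C.next_lt ‹_›

variable [WellFoundedLT W]

open Classical in
theorem lowerTrace_of_lt (h : α < β) : C.lowerTrace α β =
    C.prev α β :: (C.lowerTrace α (C.next α β)).filter (fun ξ => C.prev α β < ξ) := by
  rw [lowerTrace, dif_pos h]

theorem lowerTrace_self (α : W) : C.lowerTrace α α = [] := by
  rw [lowerTrace, dif_neg (lt_irrefl α)]

theorem lowerTrace_ne_nil (h : α < β) : C.lowerTrace α β ≠ [] := by
  rw [C.lowerTrace_of_lt h]
  exact List.cons_ne_nil _ _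

theorem lt_of_mem_lowerTrace (hα : ⊥ < α) (hξ : ξ ∈ C.lowerTrace α β) : ξ < α := by
  induction β using WellFoundedLT.induction with
  | ind β ih =>
    by_cases h : α < β
    · rw [C.lowerTrace_of_lt h] at hξ
      rcases List.mem_cons.1 hξ with rfl | hξ
      · exact C.prev_lt hα h
      · exact ih _ (C.next_lt h) (List.mem_of_mem_filter hξ)
    · rw [lowerTrace, dif_neg h] at hξ
      exact absurd hξ List.not_mem_nil

theorem prev_le_of_mem_lowerTrace (h : α < β) (hξ : ξ ∈ C.lowerTrace α β) : C.prev α β ≤ ξ := by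
  rw [C.lowerTrace_of_lt h] at hξ
  rcases List.mem_cons.1 hξ with rfl | hξ
  · exact le_rfl
  · have prev_lt : C.prev α β < ξ := by simpa only [decide_eq_true_eq] using List.of_mem_filter hξ
    exact prev_lt.le

-- Nothing of `C_γ` lies between `α` and `β`, so both walks from `γ` start with the same step.
theorem lowerTrace_eq_append (hα : ⊥ < α) (hαβ : α < β) (hβγ : β ≤ γ)
    (hlt : ∀ ξ ∈ C.lowerTrace β γ, ∀ η ∈ C.lowerTrace α β, ξ < η) :
    C.lowerTrace α γ = C.lowerTrace β γ ++ C.lowerTrace α β := by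
  induction γ using WellFoundedLT.induction with
  | ind γ ih =>
    rcases hβγ.eq_or_lt with rfl | hβγ
    · rw [lowerTrace_self, List.nil_append]
    have hαγ := hαβ.trans hβγ
    have htrace := C.lowerTrace_of_lt hβγ
    have prev_lt_trace : ∀ η ∈ C.lowerTrace α β, C.prev β γ < η :=
      hlt _ (htrace ▸ List.mem_cons_self)
    have prev_lt_α : C.prev β γ < α := by
      obtain ⟨η, hη⟩ := List.exists_mem_of_ne_nil _ (C.lowerTrace_ne_nil hαβ)
      exact (prev_lt_trace η hη).trans (C.lt_of_mem_lowerTrace hα hη)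
    have lt_α_iff : ∀ c ∈ C.ladder γ, (c < α ↔ c < β) := fun c hc =>
      ⟨fun h => h.trans hαβ, fun h => (C.le_prev hβγ hc h).trans_lt prev_lt_α⟩
    have prev_eq : C.prev α γ = C.prev β γ :=
      congrArg sSup (Set.ext fun c => and_congr_right (lt_α_iff c))
    have next_eq : C.next α γ = C.next β γ :=
      congrArg sInf (Set.ext fun c => and_congr_right fun hc => by
        simpa only [mem_Ici, not_lt] using not_congr (lt_α_iff c hc))
    have tail_eq : C.lowerTrace α (C.next β γ) =
        C.lowerTrace β (C.next β γ) ++ C.lowerTrace α β := by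
      refine ih _ (C.next_lt hβγ) (C.le_next hβγ) fun ξ hξ η hη => ?_
      by_cases hprev : C.prev β γ < ξ
      · refine hlt ξ ?_ η hη
        rw [htrace]
        exact List.mem_cons_of_mem _ (List.mem_filter.2 ⟨hξ, decide_eq_true hprev⟩)
      · exact (not_lt.1 hprev).trans_lt (prev_lt_trace η hη)
    rw [C.lowerTrace_of_lt hαγ, htrace, prev_eq, next_eq, tail_eq, List.filter_append,
      List.cons_append,
      List.filter_eq_self.2 fun η hη => decide_eq_true (prev_lt_trace η hη)]

theorem exists_lt_forall_le_lowerTrace (hδ : IsSuccLimit δ) (hγ : γ < δ) :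
    ∃ c < δ, γ < c ∧ ∀ ξ ∈ Ioo c δ, ∀ η ∈ C.lowerTrace ξ δ, c ≤ η := by
  obtain ⟨γ', hγ'δ, hγγ'⟩ := hδ.lt_iff_exists_lt.1 hγ
  obtain ⟨c, hc, hγ'c⟩ := C.nonempty_ladder_inter_Ici hγ'δ
  exact ⟨c, C.ladder_subset_Iio δ hc, hγγ'.trans_le hγ'c, fun ξ hξ η hη =>
    (C.le_prev hξ.2 hc hξ.1).trans (C.prev_le_of_mem_lowerTrace hξ.2 hη)⟩

end LowerTrace

section Rho

/-- Todorcevic's function `ρ₁`, curried: `C.rho β ξ` is `ρ₁(ξ, β)`, the largest of the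
cardinalities `|C_{β_i} ∩ ξ|` over the ordinals `β_i` visited by the walk from `β` to `ξ`. -/
noncomputable def rho [WellFoundedLT W] (β ξ : W) : ℕ :=
  if _ : ξ < β then max (C.ladder β ∩ Iio ξ).ncard (rho (C.next ξ β) ξ) else 0
termination_by wellFounded_lt.wrap β
decreasing_by exact C.next_lt ‹_›

variable [WellFoundedLT W]

theorem rho_of_lt (h : ξ < β) : C.rho β ξ =
    max (C.ladder β ∩ Iio (C.next ξ β)).ncard (C.rho (C.next ξ β) ξ) := by
  rw [rho, dif_pos h, C.ladder_inter_Iio_next h]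

theorem finite_setOf_rho_le (β : W) (n : ℕ) : {ξ | ξ < β ∧ C.rho β ξ ≤ n}.Finite := by
  induction β using WellFoundedLT.induction with
  | ind β ih =>
    have hZ : {c | c ∈ C.ladder β ∧ (C.ladder β ∩ Iio c).ncard ≤ n}.Finite :=
      Finite.of_finite_image ((finite_Iic n).subset (image_subset_iff.2 fun c hc => hc.2))
        ((C.strictMonoOn_ncard_ladder_inter_Iio β).injOn.mono fun c hc => hc.1)
    refine (hZ.biUnion fun c hc => (ih c (C.ladder_subset_Iio β hc.1)).insert c).subset ?_
    rintro ξ ⟨hξ, hn⟩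
    rw [C.rho_of_lt hξ, max_le_iff] at hn
    refine mem_biUnion ⟨(C.next_mem hξ).1, hn.1⟩ ?_
    exact (C.le_next hξ).eq_or_lt.imp id fun h => ⟨h, hn.2⟩

theorem finite_setOf_rho_ne (h : α ≤ β) : {ξ | ξ < α ∧ C.rho α ξ ≠ C.rho β ξ}.Finite := by
  induction β using WellFoundedLT.induction generalizing α with
  | ind β ih =>
    rcases h.eq_or_lt with rfl | hα
    · simp
    -- The values of `next ξ β` for `ξ < α`.
    have hsteps : (insert (C.next α β) (C.ladder β ∩ Iio (C.next α β))).Finite :=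
      (C.finite_ladder_inter_Iio (C.next_lt hα)).insert _
    have hbad : ∀ γ ∈ insert (C.next α β) (C.ladder β ∩ Iio (C.next α β)),
        (insert γ {ξ | ξ < γ ∧ C.rho γ ξ ≤ (C.ladder β ∩ Iio γ).ncard} ∪
          {ξ | ξ < γ ∧ ξ < α ∧ C.rho γ ξ ≠ C.rho α ξ}).Finite := by
      intro γ hγ
      have hγβ : γ < β := by
        rcases hγ with rfl | hγ
        · exact C.next_lt hα
        · exact C.ladder_subset_Iio β hγ.1
      refine ((C.finite_setOf_rho_le γ _).insert γ).union ?_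
      rcases le_total γ α with hle | hle
      · exact (ih α hα hle).subset fun ξ hξ => ⟨hξ.1, hξ.2.2⟩
      · exact (ih γ hγβ hle).subset fun ξ hξ => ⟨hξ.2.1, hξ.2.2.symm⟩
    refine (hsteps.biUnion hbad).subset ?_
    rintro ξ ⟨hξ, hne⟩
    have hξβ := hξ.trans hα
    have hstep := C.next_le (C.next_mem hα).1 (hξ.le.trans (C.le_next hα))
    refine mem_biUnion (hstep.eq_or_lt.imp id fun h => ⟨(C.next_mem hξβ).1, h⟩) ?_
    rw [C.rho_of_lt hξβ] at hne
    rcases (C.le_next hξβ).eq_or_lt with h | h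
    · exact Or.inl (Or.inl h)
    rcases le_or_gt (C.rho (C.next ξ β) ξ) (C.ladder β ∩ Iio (C.next ξ β)).ncard with hle | hlt
    · exact Or.inl (Or.inr ⟨h, hle⟩)
    · exact Or.inr ⟨h, hξ, (max_eq_right hlt.le ▸ hne).symm⟩

theorem exists_lt_forall_rho_eq (hδ : ⊥ < δ) {E : Set W} (hE : E.Finite) (hδE : E ⊆ Ici δ) :
    ∃ γ < δ, ∀ β ∈ E, ∀ ξ ∈ Ioo γ δ, C.rho β ξ = C.rho δ ξ := by
  have hfin : (⋃ β ∈ E, {ξ | ξ < δ ∧ C.rho δ ξ ≠ C.rho β ξ}).Finite :=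
    hE.biUnion fun β hβ => C.finite_setOf_rho_ne (hδE hβ)
  refine ⟨_, csSup_lt_of_finite hδ hfin (by simp +contextual), fun β hβ ξ hξ => ?_⟩
  by_contra hne
  exact hξ.1.not_ge (le_csSup hfin.bddAbove (mem_biUnion hβ ⟨hξ.2, Ne.symm hne⟩))

end Rho

/-- Moore's oscillation `osc(α, β)`: the number of places along the lower trace `L(α, β)` where
`ρ₁(·, α) ≤ ρ₁(·, β)` changes into `ρ₁(·, α) > ρ₁(·, β)`. -/
noncomputable def osc [WellFoundedLT W] (α β : W) : ℕ :=
  fallCount false (comparison (C.rho α) (C.rho β) (C.lowerTrace α β))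

end CSequence

section Reflection

/-- `δ` reflects `P` if any `P c F` with parameters below `δ` has a witness below `δ` as soon as it
has a witness. This is the form in which `δ = M ∩ ω₁`, for `M` a countable elementary submodel
containing `P`, is used. -/
def Reflects {W : Type*} [LT W] (δ : W) (P : W → List W → W → Prop) : Prop :=
  ∀ c < δ, ∀ F : List W, (∀ z ∈ F, z < δ) → (∃ z, P c F z) → ∃ z < δ, P c F z

theorem Reflects.not_bddAbove {W : Type*} [Preorder W] {δ c d : W} {F : List W}
    {D : W → List W → Set W} (h : Reflects δ fun c F z => z ∈ upperBounds (D c F)) (hc : c < δ)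
    (hF : ∀ z ∈ F, z < δ) (hd : d ∈ D c F) (hδd : δ ≤ d) : ¬BddAbove (D c F) := fun hbdd => by
  obtain ⟨z, hzδ, hz⟩ := h c hc F hF hbdd
  exact (hzδ.trans_le hδd).not_ge (hz hd)

theorem exists_forall_lt {W : Type*} [LinearOrder W] [∀ a : W, Countable (Iio a)] [Uncountable W]
    {ι : Type*} [Countable ι] (f : ι → W) : ∃ b, ∀ i, f i < b := by
  by_contra! h
  have hIic (i : ι) : (Iic (f i)).Countable :=
    Iio_insert (a := f i) ▸ (Iio (f i)).to_countable.insert (f i)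
  exact not_countable_univ (α := W)
    ((countable_iUnion hIic).mono fun b _ => mem_iUnion.2 (h b))

theorem exists_gt_forall_lt {W : Type*} [LinearOrder W] [∀ a : W, Countable (Iio a)] [Uncountable W]
    {ι : Type*} [Countable ι] (g : ι → W → List W → W) (z : W) :
    ∃ z', z < z' ∧ ∀ i, ∀ c ≤ z, ∀ F : List W, (∀ x ∈ F, x ≤ z) → g i c F < z' := by
  have : Countable (Iic z) := (Iio_insert (a := z) ▸ (Iio z).to_countable.insert z).to_subtype
  obtain ⟨b, hb⟩ := exists_forall_lt fun p : ι × Iic z × List (Iic z) =>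
    g p.1 p.2.1 (p.2.2.map Subtype.val)
  obtain ⟨b', hb'⟩ := exists_forall_lt fun _ : Unit => z
  refine ⟨max b b', lt_max_of_lt_right (hb' ()), fun i c hc F hF => lt_max_of_lt_left ?_⟩
  have hFz : (F.attachWith (· ∈ Iic z) hF).map Subtype.val = F := List.attachWith_map_subtype_val hF
  exact hFz ▸ hb (i, ⟨c, hc⟩, F.attachWith _ hF)

variable {W : Type*} [ConditionallyCompleteLinearOrderBot W]
  [∀ a : W, Countable (Iio a)] [Uncountable W]

theorem exists_isSuccLimit_forall_lt {ι : Type*} [Countable ι] (g : ι → W → List W → W) :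
    ∃ δ, IsSuccLimit δ ∧ ∀ i, ∀ c < δ, ∀ F : List W, (∀ x ∈ F, x < δ) → g i c F < δ := by
  choose h lt_h hgh using exists_gt_forall_lt g
  let s : ℕ → W := fun n => h^[n] ⊥
  have s_succ (n : ℕ) : s (n + 1) = h (s n) := Function.iterate_succ_apply' h n ⊥
  have s_mono : StrictMono s := strictMono_nat_of_lt_succ fun n => s_succ n ▸ lt_h (s n)
  obtain ⟨b, hb⟩ := exists_forall_lt s
  have s_bdd : BddAbove (range s) := ⟨b, forall_mem_range.2 fun n => (hb n).le⟩
  have s_lt (n : ℕ) : s n < ⨆ n, s n := (lt_ciSup_iff s_bdd).2 ⟨n + 1, s_mono n.lt_succ_self⟩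
  refine ⟨⨆ n, s n, ?_, fun i c hc F hF => ?_⟩
  · refine (isLUB_ciSup s_bdd).isSuccLimit_of_notMem (range_nonempty s) ?_
    rintro ⟨n, hn⟩
    exact (s_lt n).ne hn
  · have hbelow : sSup (insert c {x | x ∈ F}) < ⨆ n, s n :=
      csSup_lt_of_finite (bot_le.trans_lt hc) (F.finite_toSet.insert c) (by
        rintro x (rfl | hx)
        exacts [hc, hF x hx])
    obtain ⟨n, hn⟩ := (lt_ciSup_iff s_bdd).1 hbelow
    have hle : ∀ x ∈ insert c {x | x ∈ F}, x ≤ s n := fun x hx =>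
      (le_csSup (F.finite_toSet.insert c).bddAbove hx).trans hn.le
    exact (hgh (s n) i c (hle c (mem_insert _ _)) F fun x hx => hle x (Or.inr hx)).trans
      (s_succ n ▸ s_lt (n + 1))

theorem exists_isSuccLimit_reflects {Φ : Set (W → List W → W → Prop)} (hΦ : Φ.Countable) :
    ∃ δ, IsSuccLimit δ ∧ ∀ P ∈ Φ, Reflects δ P := by
  have : Countable Φ := hΦ.to_subtype
  obtain ⟨δ, hδ, hlt⟩ := exists_isSuccLimit_forall_lt fun (P : Φ) c F =>
    Classical.epsilon fun z => P.1 c F z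
  exact ⟨δ, hδ, fun P hP c hc F hF hz => ⟨_, hlt ⟨P, hP⟩ c hc F hF, Classical.epsilon_spec hz⟩⟩

end Reflection

namespace CSequence

variable {W : Type*} [ConditionallyCompleteLinearOrderBot W] [WellFoundedLT W]
  (C : CSequence W) {A B X : Set W} {δ : W} {p q r : W × W} {l l' : List W}

/-- For arbitrarily large `α ∈ X`, the function `ρ₁(·, α)` exceeds any given bound on any given
finite set of ordinals above `g`. -/
def DominatesAbove (X : Set W) (g : W) : Prop :=
  ∀ (n : ℕ) (G : Set W), G.Finite → (∀ ξ ∈ G, g < ξ) →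
    ∀ x, ∃ α ∈ X, x ≤ α ∧ ∀ ξ ∈ G, n < C.rho α ξ

section Dominating

variable [∀ a : W, Countable (Iio a)] [Uncountable W]

-- If every `g` fails, stacking counterexamples `G` above one another gives a single `α` for which
-- `C.rho α` takes values `≤ n` infinitely often.
theorem exists_forall_lt_rho (hX : ¬BddAbove X) (n : ℕ) :
    ∃ g, ∀ G : Set W, G.Finite → (∀ ξ ∈ G, g < ξ) →
      ∀ x, ∃ α ∈ X, x ≤ α ∧ ∀ ξ ∈ G, n < C.rho α ξ := by
  by_contra! h
  choose G hfin hG x hx using h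
  let s : ℕ → W := fun i => (fun g => sSup (G g))^[i] ⊥
  have s_succ (i : ℕ) : s (i + 1) = sSup (G (s i)) := Function.iterate_succ_apply' _ i ⊥
  obtain ⟨b, hb⟩ := exists_forall_lt s
  obtain ⟨b', hb'⟩ := exists_forall_lt fun i => x (s i)
  obtain ⟨α, hα, hbα⟩ := not_bddAbove_iff.1 hX (max b b')
  rw [max_lt_iff] at hbα
  choose ξ hξ hξn using fun i => hx (s i) α hα ((hb' i).trans hbα.2).le
  have ξ_le (i : ℕ) : ξ i ≤ s (i + 1) := s_succ i ▸ le_csSup (hfin (s i)).bddAbove (hξ i)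
  have ξ_mono : StrictMono ξ :=
    strictMono_nat_of_lt_succ fun i => (ξ_le i).trans_lt (hG _ _ (hξ (i + 1)))
  refine infinite_range_of_injective ξ_mono.injective ((C.finite_setOf_rho_le α n).subset ?_)
  exact range_subset_iff.2 fun i => ⟨(ξ_le i).trans_lt ((hb (i + 1)).trans hbα.1), hξn i⟩

theorem exists_dominatesAbove (hX : ¬BddAbove X) : ∃ g, C.DominatesAbove X g := by
  choose g hg using C.exists_forall_lt_rho hX
  obtain ⟨b, hb⟩ := exists_forall_lt g
  exact ⟨b, fun n G hfin hG => hg n G hfin fun ξ hξ => (hb n).trans (hG ξ hξ)⟩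

end Dominating

/-- The elements of `A` at which the restriction of `ρ₁` to the list `F` is prescribed by `s`. -/
def fiber (A : Set W) (F : List W) (s : List ℕ) : Set W :=
  {a ∈ A | F.map (C.rho a) = s}

/-- The ordinals `d` lying below some pair of `A × B` whose behaviour on its lower trace down to
`d` is prescribed by `F`, `s` and `t`, while above `c` every lower trace into `d` is a place of
agreement of the pair. -/
def splitPoints (A B : Set W) (c : W) (F : List W) (s t : List ℕ) : Set W :=
  {d | ∃ p ∈ (A ∩ Ici d) ×ˢ (B ∩ Ici d), C.lowerTrace d p.2 = F ∧
    F.map (C.rho p.1) = s ∧ F.map (C.rho p.2) = t ∧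
    ∀ ξ ∈ Ioo c d, ∀ η ∈ C.lowerTrace ξ d, c ≤ η ∧ C.rho p.1 η = C.rho p.2 η}

/-- A limit `δ` that reflects everything about `A` and `B` the oscillation argument asks for. -/
structure IsReflectionPoint (A B : Set W) (δ : W) : Prop where
  isSuccLimit : IsSuccLimit δ
  reflects_fiber (s : List ℕ) : Reflects δ fun c F α => α ∈ C.fiber A F s ∧ c < α
  reflects_upperBounds_fiber (s : List ℕ) :
    Reflects δ fun _ F z => z ∈ upperBounds (C.fiber A F s)
  reflects_dominatesAbove (s : List ℕ) : Reflects δ fun _ F g => C.DominatesAbove (C.fiber A F s) g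
  reflects_upperBounds_splitPoints (s t : List ℕ) :
    Reflects δ fun c F z => z ∈ upperBounds (C.splitPoints A B c F s t)

theorem exists_isReflectionPoint [∀ a : W, Countable (Iio a)] [Uncountable W] (A B : Set W) :
    ∃ δ, C.IsReflectionPoint A B δ := by
  have hΦ := (((countable_range fun s : List ℕ => fun c F α => α ∈ C.fiber A F s ∧ c < α).union
    (countable_range fun s : List ℕ => fun _ F z => z ∈ upperBounds (C.fiber A F s))).union
    (countable_range fun s : List ℕ => fun _ F g => C.DominatesAbove (C.fiber A F s) g)).union
    (countable_range fun st : List ℕ × List ℕ => fun c F z =>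
      z ∈ upperBounds (C.splitPoints A B c F st.1 st.2))
  obtain ⟨δ, hδ, h⟩ := exists_isSuccLimit_reflects hΦ
  exact ⟨δ, hδ, fun s => h _ (.inl (.inl (.inl ⟨s, rfl⟩))),
    fun s => h _ (.inl (.inl (.inr ⟨s, rfl⟩))), fun s => h _ (.inl (.inr ⟨s, rfl⟩)),
    fun s t => h _ (.inr ⟨(s, t), rfl⟩)⟩

/-- The pair `q` end-extends the pair `p` at `δ` by `l`: the lower trace grows by `l`, and on the
old part of it `ρ₁` does not change in either coordinate. -/
structure ExtendsBy (δ : W) (p : W × W) (l : List W) (q : W × W) : Prop where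
  lowerTrace_eq : C.lowerTrace δ q.2 = C.lowerTrace δ p.2 ++ l
  rho_fst : ∀ ξ ∈ C.lowerTrace δ p.2, C.rho q.1 ξ = C.rho p.1 ξ
  rho_snd : ∀ ξ ∈ C.lowerTrace δ p.2, C.rho q.2 ξ = C.rho p.2 ξ

/-- The comparison word of a pair `p` along the lower trace from its second coordinate to `δ`. -/
noncomputable def pairWord (δ : W) (p : W × W) : List Bool :=
  comparison (C.rho p.1) (C.rho p.2) (C.lowerTrace δ p.2)

variable {C}

namespace ExtendsBy

theorem refl (δ : W) (p : W × W) : C.ExtendsBy δ p [] p :=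
  ⟨(List.append_nil _).symm, fun _ _ => rfl, fun _ _ => rfl⟩

theorem mem_lowerTrace (h : C.ExtendsBy δ p l q) {ξ : W} (hξ : ξ ∈ C.lowerTrace δ p.2) :
    ξ ∈ C.lowerTrace δ q.2 :=
  h.lowerTrace_eq ▸ List.mem_append_left l hξ

theorem trans (h : C.ExtendsBy δ p l q) (h' : C.ExtendsBy δ q l' r) :
    C.ExtendsBy δ p (l ++ l') r where
  lowerTrace_eq := by rw [h'.lowerTrace_eq, h.lowerTrace_eq, List.append_assoc]
  rho_fst ξ hξ := (h'.rho_fst ξ (h.mem_lowerTrace hξ)).trans (h.rho_fst ξ hξ)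
  rho_snd ξ hξ := (h'.rho_snd ξ (h.mem_lowerTrace hξ)).trans (h.rho_snd ξ hξ)

theorem pairWord_eq (h : C.ExtendsBy δ p l q) :
    C.pairWord δ q = C.pairWord δ p ++ comparison (C.rho q.1) (C.rho q.2) l := by
  rw [pairWord, h.lowerTrace_eq, comparison_append, comparison_congr h.rho_fst h.rho_snd, pairWord]

end ExtendsBy

namespace IsReflectionPoint

variable (hδ : C.IsReflectionPoint A B δ)
include hδ

theorem lt_of_mem_lowerTrace {β ξ : W} (hξ : ξ ∈ C.lowerTrace δ β) : ξ < δ :=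
  C.lt_of_mem_lowerTrace hδ.isSuccLimit.bot_lt hξ

theorem exists_extendsBy_eq (hp : p ∈ (A ∩ Ici δ) ×ˢ (B ∩ Ici δ)) {γ : W} (hγ : γ < δ) :
    ∃ q ∈ (A ∩ Ici δ) ×ˢ (B ∩ Ici δ), ∃ l ≠ [], C.ExtendsBy δ p l q ∧
      ∀ ξ ∈ l, γ < ξ ∧ C.rho q.1 ξ = C.rho q.2 ξ := by
  let F := C.lowerTrace δ p.2
  have hF : ∀ z ∈ F, z < δ := fun z => hδ.lt_of_mem_lowerTrace
  obtain ⟨γ', hγ', hrho⟩ := C.exists_lt_forall_rho_eq hδ.isSuccLimit.bot_lt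
    (E := {p.1, p.2}) (by simp) (by simp [insert_subset_iff, hp.1.2, hp.2.2])
  have hfin : (insert γ (insert γ' {z | z ∈ F})).Finite := (F.finite_toSet.insert _).insert _
  obtain ⟨c, hcδ, hsup, hc⟩ := C.exists_lt_forall_le_lowerTrace hδ.isSuccLimit
    (csSup_lt_of_finite hδ.isSuccLimit.bot_lt hfin (by simpa [hγ, hγ'] using hF))
  have lt_c : ∀ z ∈ insert γ (insert γ' {z | z ∈ F}), z < c := fun z hz =>
    (le_csSup hfin.bddAbove hz).trans_lt hsup
  have hδ_mem : δ ∈ C.splitPoints A B c F (F.map (C.rho p.1)) (F.map (C.rho p.2)) := by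
    refine ⟨p, hp, rfl, rfl, rfl, fun ξ hξ η hη => ⟨hc ξ hξ η hη, ?_⟩⟩
    have hη' : η ∈ Ioo γ' δ := ⟨(lt_c γ' (by simp)).trans_le (hc ξ hξ η hη),
      (C.lt_of_mem_lowerTrace (bot_le.trans_lt hξ.1) hη).trans hξ.2⟩
    rw [hrho p.1 (by simp) η hη', hrho p.2 (by simp) η hη']
  obtain ⟨d, ⟨q, hq, htrace, hfst, hsnd, hqd⟩, hδd⟩ := not_bddAbove_iff.1
    ((hδ.reflects_upperBounds_splitPoints _ _).not_bddAbove hcδ hF hδ_mem le_rfl) δ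
  have hδq := hqd δ ⟨hcδ, hδd⟩
  refine ⟨q, ⟨⟨hq.1.1, hδd.le.trans hq.1.2⟩, ⟨hq.2.1, hδd.le.trans hq.2.2⟩⟩, C.lowerTrace δ d,
    C.lowerTrace_ne_nil hδd, ⟨?_, List.map_inj_left.1 hfst, List.map_inj_left.1 hsnd⟩,
    fun ξ hξ => ⟨(lt_c γ (by simp)).trans_le (hδq ξ hξ).1, (hδq ξ hξ).2⟩⟩
  rw [C.lowerTrace_eq_append hδ.isSuccLimit.bot_lt hδd hq.2.2, htrace]
  intro ξ hξ η hη
  exact (lt_c ξ (Or.inr (Or.inr (htrace ▸ hξ)))).trans_le (hδq η hη).1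

theorem exists_extendsBy_lt [∀ a : W, Countable (Iio a)] [Uncountable W]
    (hp : p ∈ (A ∩ Ici δ) ×ˢ (B ∩ Ici δ)) :
    ∃ q ∈ (A ∩ Ici δ) ×ˢ (B ∩ Ici δ), ∃ l ≠ [], C.ExtendsBy δ p l q ∧
      ∀ ξ ∈ l, C.rho q.2 ξ < C.rho q.1 ξ := by
  let F := C.lowerTrace δ p.2
  let X := C.fiber A F (F.map (C.rho p.1))
  have hF : ∀ z ∈ F, z < δ := fun z => hδ.lt_of_mem_lowerTrace
  have hX : ¬BddAbove X := (hδ.reflects_upperBounds_fiber (F.map (C.rho p.1))).not_bddAbove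
    hδ.isSuccLimit.bot_lt hF (d := p.1) ⟨hp.1.1, rfl⟩ hp.1.2
  obtain ⟨g, hgδ, hg⟩ := hδ.reflects_dominatesAbove (F.map (C.rho p.1)) ⊥ hδ.isSuccLimit.bot_lt F hF
    (C.exists_dominatesAbove hX)
  obtain ⟨q, hq, l, hl, hpq, hgl⟩ := hδ.exists_extendsBy_eq hp hgδ
  obtain ⟨α, ⟨hαA, hα⟩, hδα, hlt⟩ :=
    hg (l.map (C.rho q.2)).sum {ξ | ξ ∈ l} l.finite_toSet (fun ξ hξ => (hgl ξ hξ).1) δ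
  refine ⟨(α, q.2), ⟨⟨hαA, hδα⟩, hq.2⟩, l, hl,
    ⟨hpq.lowerTrace_eq, List.map_inj_left.1 hα, hpq.rho_snd⟩, fun ξ hξ => ?_⟩
  exact (List.single_le_sum (fun _ _ => Nat.zero_le _) _ (List.mem_map_of_mem hξ)).trans_lt
    (hlt ξ hξ)

theorem exists_extendsBy_fallCount_succ [∀ a : W, Countable (Iio a)] [Uncountable W]
    (hp : p ∈ (A ∩ Ici δ) ×ˢ (B ∩ Ici δ)) (hlast : (C.pairWord δ p).getLastD false = true) :
    ∃ q ∈ (A ∩ Ici δ) ×ˢ (B ∩ Ici δ), (C.pairWord δ q).getLastD false = true ∧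
      fallCount false (C.pairWord δ q) = fallCount false (C.pairWord δ p) + 1 ∧
      ∃ l, C.ExtendsBy δ p l q := by
  obtain ⟨q, hq, l, hl, hpq, hlt⟩ := hδ.exists_extendsBy_lt hp
  obtain ⟨r, hr, l', hl', hqr, heq⟩ := hδ.exists_extendsBy_eq hq hδ.isSuccLimit.bot_lt
  have hword : C.pairWord δ r =
      C.pairWord δ p ++ List.replicate l.length false ++ List.replicate l'.length true := by
    rw [hqr.pairWord_eq, hpq.pairWord_eq, comparison_eq_replicate_false hlt,
      comparison_eq_replicate_true fun ξ hξ => (heq ξ hξ).2.le]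
  refine ⟨r, hr, ?_, ?_, l ++ l', hpq.trans hqr⟩
  · rw [hword, getLastD_append_replicate _ _ _ (List.length_eq_zero_iff.not.2 hl')]
  · rw [hword, fallCount_append, fallCount_append, hlast, fallCount_replicate_true,
      fallCount_true_replicate_false (List.length_eq_zero_iff.not.2 hl), add_zero]

theorem exists_seq_extendsBy [∀ a : W, Countable (Iio a)] [Uncountable W]
    (hA : (A ∩ Ici δ).Nonempty) (hB : (B ∩ Ici δ).Nonempty) :
    ∃ (p : ℕ → W × W) (c : ℕ), ∀ n, p n ∈ (A ∩ Ici δ) ×ˢ (B ∩ Ici δ) ∧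
      (C.pairWord δ (p n)).getLastD false = true ∧ fallCount false (C.pairWord δ (p n)) = c + n ∧
      ∀ i ≤ n, ∃ l, C.ExtendsBy δ (p i) l (p n) := by
  obtain ⟨q, hq⟩ := hA.prod hB
  obtain ⟨r, hr, l, hl, hqr, heq⟩ := hδ.exists_extendsBy_eq hq hδ.isSuccLimit.bot_lt
  have hr_last : (C.pairWord δ r).getLastD false = true := by
    rw [hqr.pairWord_eq, comparison_eq_replicate_true fun ξ hξ => (heq ξ hξ).2.le,
      getLastD_append_replicate _ _ _ (List.length_eq_zero_iff.not.2 hl)]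
  choose! next hmem hlast hfall hext using
    fun p hp hp' => hδ.exists_extendsBy_fallCount_succ (p := p) hp hp'
  let p : ℕ → W × W := fun n => next^[n] r
  have p_succ (n : ℕ) : p (n + 1) = next (p n) := Function.iterate_succ_apply' next n r
  have hp (n : ℕ) : p n ∈ (A ∩ Ici δ) ×ˢ (B ∩ Ici δ) ∧
      (C.pairWord δ (p n)).getLastD false = true := by
    induction n with
    | zero => exact ⟨hr, hr_last⟩
    | succ n ih => exact p_succ n ▸ ⟨hmem _ ih.1 ih.2, hlast _ ih.1 ih.2⟩
  refine ⟨p, fallCount false (C.pairWord δ r), fun n => ⟨(hp n).1, (hp n).2, ?_, fun i hi => ?_⟩⟩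
  · induction n with
    | zero => rfl
    | succ n ih => rw [p_succ, hfall _ (hp n).1 (hp n).2, ih, add_assoc]
  · induction n, hi using Nat.le_induction with
    | base => exact ⟨[], .refl δ (p i)⟩
    | succ n _ ih =>
      obtain ⟨l, hl⟩ := ih
      obtain ⟨l', hl'⟩ := hext _ (hp n).1 (hp n).2
      exact ⟨l ++ l', hl.trans (p_succ n ▸ hl')⟩

end IsReflectionPoint

theorem osc_eq_fallCount_add {α : W} (hα : ⊥ < α) (hαδ : α < δ) (hδp : δ ≤ p.2)
    (hlast : (C.pairWord δ p).getLastD false = true)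
    (hlt : ∀ ξ ∈ C.lowerTrace δ p.2, ∀ η ∈ C.lowerTrace α δ, ξ < η)
    (hfst : ∀ ξ ∈ C.lowerTrace δ p.2, C.rho α ξ = C.rho p.1 ξ)
    (hsnd : ∀ η ∈ C.lowerTrace α δ, C.rho p.2 η = C.rho δ η) :
    C.osc α p.2 = fallCount false (C.pairWord δ p) +
      fallCount true (comparison (C.rho α) (C.rho δ) (C.lowerTrace α δ)) := by
  rw [osc, C.lowerTrace_eq_append hα hαδ hδp hlt, comparison_append,
    comparison_congr hfst fun _ _ => rfl, comparison_congr (fun _ _ => rfl) hsnd,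
    fallCount_append]
  exact congrArg (fun b => _ + fallCount b _) hlast

theorem exists_forall_le_exists_osc_eq [∀ a : W, Countable (Iio a)] [Uncountable W]
    (C : CSequence W) (hA : ¬A.Countable) (hB : ¬B.Countable) (N : ℕ) :
    ∃ c, ∀ i ≤ N, ∃ α ∈ A, ∃ β ∈ B, α < β ∧ C.osc α β = c + i := by
  obtain ⟨δ, hδ⟩ := C.exists_isReflectionPoint A B
  have inter_Ici_nonempty {X : Set W} (hX : ¬X.Countable) : (X ∩ Ici δ).Nonempty := by
    by_contra h
    refine hX ((Iio δ).to_countable.mono fun x hx => not_le.1 fun hδx => h ⟨x, hx, hδx⟩)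
  obtain ⟨p, c, hp⟩ := hδ.exists_seq_extendsBy (inter_Ici_nonempty hA) (inter_Ici_nonempty hB)
  choose hmem hlast hfall hext using hp
  obtain ⟨γ, hγδ, hγ⟩ := C.exists_lt_forall_rho_eq hδ.isSuccLimit.bot_lt
    ((finite_Iic N).image fun i => (p i).2) (image_subset_iff.2 fun i _ => (hmem i).2.2)
  let F := C.lowerTrace δ (p N).2
  have hF : ∀ z ∈ F, z < δ := fun z => hδ.lt_of_mem_lowerTrace
  have hfin : (insert γ {z | z ∈ F}).Finite := F.finite_toSet.insert γ
  obtain ⟨x, hxδ, hsup, hx⟩ := C.exists_lt_forall_le_lowerTrace hδ.isSuccLimit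
    (csSup_lt_of_finite hδ.isSuccLimit.bot_lt hfin (by simpa [hγδ] using hF))
  have lt_x : ∀ z ∈ insert γ {z | z ∈ F}, z < x := fun z hz =>
    (le_csSup hfin.bddAbove hz).trans_lt hsup
  obtain ⟨α, hαδ, ⟨hαA, hα⟩, hxα⟩ := hδ.reflects_fiber (F.map (C.rho (p N).1)) x hxδ F hF
    ⟨_, ⟨(hmem N).1.1, rfl⟩, hxδ.trans_le (hmem N).1.2⟩
  rw [List.map_inj_left] at hα
  have hxα_trace := hx α ⟨hxα, hαδ⟩
  have bot_lt_α := bot_le.trans_lt hxα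
  refine ⟨c + fallCount true (comparison (C.rho α) (C.rho δ) (C.lowerTrace α δ)), fun i hi =>
    ⟨α, hαA, (p i).2, (hmem i).2.1, hαδ.trans_le (hmem i).2.2, ?_⟩⟩
  obtain ⟨l, hl⟩ := hext N i hi
  rw [osc_eq_fallCount_add bot_lt_α hαδ (hmem i).2.2 (hlast i), hfall i, add_right_comm]
  · exact fun ξ hξ η hη => (lt_x ξ (Or.inr (hl.mem_lowerTrace hξ))).trans_le (hxα_trace η hη)
  · exact fun ξ hξ => (hα ξ (hl.mem_lowerTrace hξ)).trans (hl.rho_fst ξ hξ)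
  · exact fun η hη => hγ _ (mem_image_of_mem _ hi) η
      ⟨(lt_x γ (mem_insert _ _)).trans_le (hxα_trace η hη),
        (C.lt_of_mem_lowerTrace bot_lt_α hη).trans hαδ⟩

end CSequence

theorem exists_le_padicValNat_add_eq {b : ℕ} (hb : 1 < b) (c k : ℕ) :
    ∃ i ≤ b ^ (k + 1) + b ^ k, padicValNat b (c + i) = k := by
  have hmod := Nat.mod_lt c (show 0 < b ^ (k + 1) by positivity)
  refine ⟨b ^ (k + 1) - c % b ^ (k + 1) + b ^ k, by lia, ?_⟩
  have hfactor : c + (b ^ (k + 1) - c % b ^ (k + 1) + b ^ k) =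
      b ^ k * (b * (c / b ^ (k + 1) + 1) + 1) := by
    have hdiv := Nat.div_add_mod c (b ^ (k + 1))
    have hexpand : b ^ k * (b * (c / b ^ (k + 1) + 1) + 1) =
        b ^ (k + 1) * (c / b ^ (k + 1)) + b ^ (k + 1) + b ^ k := by ring
    lia
  have hndvd : ¬b ∣ b * (c / b ^ (k + 1) + 1) + 1 := fun h =>
    hb.ne' (Nat.dvd_one.1 ((Nat.dvd_add_right (dvd_mul_right b _)).1 h))
  rw [hfactor, padicValNat_base_pow_mul hb (Nat.succ_ne_zero _),
    padicValNat.eq_zero_of_not_dvd hndvd, zero_add]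

theorem exists_not_countable_setOf_eq {W : Type*} [LinearOrder W] [∀ a : W, Countable (Iio a)]
    {B : Set W} (hB : ¬B.Countable) {e : W → ℕ → W} (he : ∀ β, Iio β ⊆ range (e β)) (ξ : W) :
    ∃ k, ¬{β ∈ B | e β k = ξ}.Countable := by
  by_contra! h
  refine hB (((countable_iUnion h).union ((Iio ξ).to_countable.insert ξ)).mono fun β hβ => ?_)
  rcases lt_or_ge ξ β with hlt | hle
  · obtain ⟨k, hk⟩ := he β hlt
    exact Or.inl (mem_iUnion.2 ⟨k, hβ, hk⟩)
  · exact Or.inr hle.eq_or_lt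

theorem exists_forall_not_countable_exists_lt_eq (W : Type*) [LinearOrder W] [WellFoundedLT W]
    [∀ a : W, Countable (Iio a)] [Uncountable W] :
    ∃ f : W → W → W, ∀ A B : Set W, ¬A.Countable → ¬B.Countable →
      ∀ ξ, ∃ α ∈ A, ∃ β ∈ B, α < β ∧ f α β = ξ := by
  let := WellFoundedLT.toOrderBot W
  let := WellFoundedLT.conditionallyCompleteLinearOrderBot W
  obtain ⟨C⟩ := nonempty_cSequence (W := W)
  choose e he using fun β : W => countable_iff_exists_subset_range.1 (Iio β).to_countable
  refine ⟨fun α β => e β (padicValNat 2 (C.osc α β)), fun A B hA hB ξ => ?_⟩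
  obtain ⟨k, hk⟩ := exists_not_countable_setOf_eq hB he ξ
  obtain ⟨c, hc⟩ := C.exists_forall_le_exists_osc_eq hA hk (2 ^ (k + 1) + 2 ^ k)
  obtain ⟨i, hi, hik⟩ := exists_le_padicValNat_add_eq one_lt_two c k
  obtain ⟨α, hα, β, ⟨hβ, hβk⟩, hlt, hosc⟩ := hc i hi
  exact ⟨α, hα, β, hβ, hlt, by simp only [hosc, hik, hβk]⟩

section Omega1

universe u v

open Cardinal

theorem mk_Iio_omega1 : #(Iio omega1.{u}) = ℵ₁ := by
  simp [omega1]

instance uncountable_Iio_omega1 : Uncountable (Iio omega1.{u}) := by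
  rw [← aleph0_lt_mk_iff, mk_Iio_omega1]
  exact aleph0_lt_aleph_one

instance countable_Iio_of_Iio_omega1 (a : Iio omega1.{u}) : Countable (Iio a) := by
  have hIio : (Iio a.1).Countable := by
    rw [← le_aleph0_iff_set_countable, mk_Iio_ordinal, lift_le_aleph0, ← lt_aleph_one_iff]
    exact lt_ord.1 a.2
  exact (hIio.preimage Subtype.val_injective).to_subtype

theorem nonempty_Iio_omega1_equiv : Nonempty (Iio omega1.{u} ≃ Iio omega1.{v}) := by
  rw [← lift_mk_eq', mk_Iio_omega1, mk_Iio_omega1, lift_aleph, lift_aleph]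
  simp

end Omega1

end MooreOscillation

/-- **Theorem (Moore).** There is a function `f : [ω₁]² → ω₁` such that whenever
`A, B ⊆ ω₁` are uncountable and `ξ < ω₁`, there exist `α ∈ A` and `β ∈ B` with
`α < β` and `f(α,β) = ξ`.  (We represent `f` as a two-variable function, whose
value at the unordered pair `{α,β}` with `α < β` is `f α β`.) -/
theorem statement0 :
    ∃ f : Ordinal → Ordinal → Ordinal,
      ∀ A B : Set Ordinal,
        A ⊆ Set.Iio omega1 → B ⊆ Set.Iio omega1 →
        ¬ A.Countable → ¬ B.Countable →
        ∀ ξ < omega1, ∃ α ∈ A, ∃ β ∈ B, α < β ∧ f α β = ξ := by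
  obtain ⟨f, hf⟩ :=
    MooreOscillation.exists_forall_not_countable_exists_lt_eq (Set.Iio omega1)
  obtain ⟨e⟩ := MooreOscillation.nonempty_Iio_omega1_equiv
  let r := Function.invFun (Subtype.val : Set.Iio omega1 → Ordinal)
  have hr (x : Set.Iio omega1) : r x = x := Function.leftInverse_invFun Subtype.val_injective x
  have not_countable_preimage {X : Set Ordinal} (hX : X ⊆ Set.Iio omega1) (hXc : ¬X.Countable) :
      ¬(Subtype.val ⁻¹' X : Set (Set.Iio omega1)).Countable := fun h => hXc <| by
    simpa [Set.inter_eq_right.2 hX] using h.image Subtype.val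
  refine ⟨fun α β => e (f (r α) (r β)), fun A B hA hB hAc hBc ξ hξ => ?_⟩
  obtain ⟨α, hα, β, hβ, hlt, hfξ⟩ := hf _ _ (not_countable_preimage hA hAc)
    (not_countable_preimage hB hBc) (e.symm ⟨ξ, hξ⟩)
  exact ⟨α, hα, β, hβ, hlt, by simp only [hr, hfξ, e.apply_symm_apply]⟩
end

section
/- There exists a regular Hausdorff topological space that is hereditarily Lindelöf and not separable (an L space). -/
/-!
Moore's construction: the walk from `β` down to `α < β` along a C-sequence on `ω₁` gives a weight to
each such pair. Let `osc(α, β)` count how often, along the lower trace of this walk, the weight from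
`α` becomes larger than the one from `β`. For an uncountable family of pairwise disjoint finite sets
of equal size and an uncountable `B`, some `F` in the family has the following property: moving `b`
within `B` changes the numbers `osc(α, b)` for `α ∈ F` by a common amount, which can be prescribed
in `{0, …, N}`. By Kronecker's theorem, multiples of independent points `z α` of the circle then
approximate arbitrary values on `F`.

The points of the space are the functions `α ↦ (osc(α, β) + 1) • z α`, extended by `0` to `α ≥ β`,
with the topology of pointwise convergence. If an uncountable subset were covered by open sets with
no countable subcover, a greedy choice would give uncountably many basic neighbourhoods, none
containing the centre of a later one; the approximation property forbids this. The points of a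
countable set all vanish at large `α`, so the set is not dense.
-/

open Filter MeasureTheory Set Topology

namespace LSpace

/-! ### C-sequences and walks -/

/-- A *C-sequence*: each `β` carries a set of smaller elements which is cofinal below `β` and all
of whose proper initial segments are finite. -/
structure CSequence (Ω : Type*) [Preorder Ω] where
  /-- The set usually written `C_β`. -/
  ladder : Ω → Set Ω
  lt_of_mem : ∀ {η β}, η ∈ ladder β → η < β
  finite_inter_Iio : ∀ {ξ β}, ξ < β → (ladder β ∩ Iio ξ).Finite
  exists_ge : ∀ {ξ β}, ξ < β → ∃ η ∈ ladder β, ξ ≤ η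

/-- The ladder consists of the records of an enumeration: the points above all points enumerated
before them. -/
theorem exists_ladder {Ω : Type*} [LinearOrder Ω] {β : Ω} [Countable (Iio β)] :
    ∃ c : Set Ω, (∀ η ∈ c, η < β) ∧ (∀ ξ < β, (c ∩ Iio ξ).Finite) ∧
      ∀ ξ < β, ∃ η ∈ c, ξ ≤ η := by
  obtain ⟨index, index_injective⟩ := Countable.exists_injective_nat (Iio β)
  refine ⟨{η | ∃ h : η < β, ∀ ξ : Iio β, index ξ < index ⟨η, h⟩ → ξ.1 < η},
    fun η hη => hη.1, fun ξ hξ => ?_, fun ξ hξ => ?_⟩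
  · have early_finite : {y : Iio β | index y ≤ index ⟨ξ, hξ⟩}.Finite :=
      (finite_Iic (index ⟨ξ, hξ⟩)).preimage index_injective.injOn
    refine (early_finite.image Subtype.val).subset ?_
    rintro η ⟨⟨hηβ, hη⟩, hηξ⟩
    refine ⟨⟨η, hηβ⟩, mem_ofPred.2 (not_lt.1 fun hlt => ?_), rfl⟩
    exact lt_asymm hηξ (hη ⟨ξ, hξ⟩ hlt)
  · obtain ⟨y, hy, y_min⟩ := exists_minimalFor_of_wellFoundedLT (fun y : Iio β => ξ ≤ y.1) index
      ⟨⟨ξ, hξ⟩, le_rfl⟩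
    refine ⟨y.1, ⟨y.2, fun z hz => not_le.1 fun hyz => ?_⟩, hy⟩
    exact hz.not_ge (y_min (hy.trans hyz) hz.le)

theorem nonempty_cSequence {Ω : Type*} [LinearOrder Ω] [∀ β : Ω, Countable (Iio β)] :
    Nonempty (CSequence Ω) := by
  choose c lt_of_mem finite_inter_Iio exists_ge using fun β : Ω => exists_ladder (β := β)
  exact ⟨⟨c, fun h => lt_of_mem _ _ h, fun h => finite_inter_Iio _ _ h, fun h => exists_ge _ _ h⟩⟩

theorem exists_lt_forall_le_of_finite {Ω : Type*} [LinearOrder Ω] {δ : Ω}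
    (hδ : Order.IsSuccLimit δ) {s : Set Ω} (hs : s.Finite) (h : ∀ x ∈ s, x < δ) :
    ∃ γ < δ, ∀ x ∈ s, x ≤ γ := by
  induction s, hs using Set.Finite.induction_on with
  | empty =>
    obtain ⟨γ, hγ⟩ := not_isMin_iff.1 hδ.not_isMin
    exact ⟨γ, hγ, fun x hx => absurd hx (notMem_empty x)⟩
  | @insert x s _ _ ih =>
    obtain ⟨γ, hγ, hle⟩ := ih fun y hy => h y (mem_insert_of_mem x hy)
    refine ⟨max x γ, max_lt (h x (mem_insert x s)) hγ, ?_⟩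
    rintro y (rfl | hy)
    exacts [le_max_left _ _, (hle y hy).trans (le_max_right _ _)]

namespace CSequence

variable {Ω : Type*} [LinearOrder Ω] (C : CSequence Ω) {ξ ζ η x α β γ δ : Ω}

theorem exists_mem_ladder_of_finite (hδ : Order.IsSuccLimit δ) {s : Set Ω} (hs : s.Finite)
    (h : ∀ x ∈ s, x < δ) : ∃ ζ ∈ C.ladder δ, ∀ x ∈ s, x < ζ := by
  obtain ⟨γ, hγ, hle⟩ := exists_lt_forall_le_of_finite hδ hs h
  obtain ⟨γ', hγ', hlt⟩ := hδ.lt_iff_exists_lt.1 hγ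
  obtain ⟨ζ, hζ, hγζ⟩ := C.exists_ge hγ'
  exact ⟨ζ, hζ, fun x hx => (hle x hx).trans_lt (hlt.trans_le hγζ)⟩

open Classical in
/-- The finite set `C_β ∩ α` for `α < β`; it is empty when `β ≤ α`. -/
noncomputable def below (α β : Ω) : Finset Ω :=
  if h : α < β then (C.finite_inter_Iio h).toFinset else ∅

theorem mem_below (h : α < β) : η ∈ C.below α β ↔ η ∈ C.ladder β ∧ η < α := by
  simp [below, h]

theorem strictMonoOn_card_below (β : Ω) :
    StrictMonoOn (fun η => (C.below η β).card) (C.ladder β) := by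
  intro η hη ζ hζ hlt
  refine Finset.card_lt_card ((Finset.ssubset_iff_of_subset fun x hx => ?_).2 ⟨η, ?_, ?_⟩)
  · rw [C.mem_below (C.lt_of_mem hη)] at hx
    exact (C.mem_below (C.lt_of_mem hζ)).2 ⟨hx.1, hx.2.trans hlt⟩
  · exact (C.mem_below (C.lt_of_mem hζ)).2 ⟨hη, hlt⟩
  · exact fun hmem => lt_irrefl _ ((C.mem_below (C.lt_of_mem hη)).1 hmem).2

section Bot

variable [OrderBot Ω]

/-- The largest element of `C_β ∩ α`, or `⊥` when this set is empty. -/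
noncomputable def maxBelow (α β : Ω) : Ω := (C.below α β).sup id

theorem le_maxBelow (h : α < β) (hx : x ∈ C.ladder β) (hlt : x < α) : x ≤ C.maxBelow α β :=
  Finset.le_sup (f := id) ((C.mem_below h).2 ⟨hx, hlt⟩)

theorem maxBelow_lt (hα : ⊥ < α) (h : α < β) : C.maxBelow α β < α :=
  (Finset.sup_lt_iff hα).2 fun _ hx => ((C.mem_below h).1 hx).2

theorem below_eq_of_maxBelow_lt (hαβ : α ≤ β) (hβγ : β < γ) (h : C.maxBelow β γ < α) :
    C.below α γ = C.below β γ := by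
  ext x
  rw [C.mem_below (hαβ.trans_lt hβγ), C.mem_below hβγ]
  exact and_congr_right fun hx =>
    ⟨fun hlt => hlt.trans_le hαβ, fun hlt => (C.le_maxBelow hβγ hx hlt).trans_lt h⟩

end Bot

section WellFounded

variable [WellFoundedLT Ω]

open Classical in
/-- The first step `min (C_β \ α)` of the walk from `β` down to `α`; it is `α` itself when
`β ≤ α`. -/
noncomputable def next (α β : Ω) : Ω :=
  if h : ∃ η ∈ C.ladder β, α ≤ η then wellFounded_lt.min {η | η ∈ C.ladder β ∧ α ≤ η} h else α

theorem isLeast_next (h : α < β) : IsLeast {η | η ∈ C.ladder β ∧ α ≤ η} (C.next α β) := by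
  rw [next, dif_pos (C.exists_ge h)]
  exact ⟨wellFounded_lt.min_mem _ _, fun η hη => wellFounded_lt.min_le hη⟩

theorem next_mem (h : α < β) : C.next α β ∈ C.ladder β := (C.isLeast_next h).1.1

theorem le_next (h : α < β) : α ≤ C.next α β := (C.isLeast_next h).1.2

theorem next_le (h : α < β) (hη : η ∈ C.ladder β) (hle : α ≤ η) : C.next α β ≤ η :=
  (C.isLeast_next h).2 ⟨hη, hle⟩

theorem next_lt (h : α < β) : C.next α β < β := C.lt_of_mem (C.next_mem h)

theorem below_next (h : α < β) : C.below (C.next α β) β = C.below α β := by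
  ext η
  rw [C.mem_below (C.next_lt h), C.mem_below h]
  refine and_congr_right fun hη => ⟨fun hlt => ?_, fun hlt => hlt.trans_le (C.le_next h)⟩
  exact not_le.1 fun hle => hlt.not_ge (C.next_le h hη hle)

/-- Moore's `e_β(α)`, the maximal weight `ρ₁` of the walk from `β` to `α`: the largest size of
`C_γ ∩ α` over the points `γ ≠ α` of the walk. -/
noncomputable def weight (α β : Ω) : ℕ :=
  if _h : α < β then max (C.below α β).card (weight α (C.next α β)) else 0
termination_by wellFounded_lt.wrap β
decreasing_by exact C.next_lt _h

theorem weight_of_lt (h : α < β) :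
    C.weight α β = max (C.below α β).card (C.weight α (C.next α β)) := by
  rw [weight, dif_pos h]

theorem finite_weight_le (β : Ω) (n : ℕ) : {ξ | ξ < β ∧ C.weight ξ β ≤ n}.Finite := by
  induction β using WellFoundedLT.induction with
  | ind β ih =>
    have steps_finite : {η | η ∈ C.ladder β ∧ (C.below η β).card ≤ n}.Finite :=
      Finite.of_finite_image ((finite_Iic n).subset (image_subset_iff.2 fun η hη => hη.2))
        ((C.strictMonoOn_card_below β).injOn.mono fun η hη => hη.1)
    refine (steps_finite.biUnion fun η hη =>
      (ih η (C.lt_of_mem hη.1)).union (finite_singleton η)).subset ?_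
    rintro ξ ⟨hξ, hn⟩
    rw [C.weight_of_lt hξ, max_le_iff] at hn
    refine mem_biUnion (x := C.next ξ β) ⟨C.next_mem hξ, by rw [C.below_next hξ]; exact hn.1⟩ ?_
    rcases (C.le_next hξ).eq_or_lt with heq | hlt
    · exact Or.inr heq
    · exact Or.inl ⟨hlt, hn.2⟩

/-- If the walks from `η` and `β` to `ξ` have different weights, the walk from `β` either stays in
`C_β` up to `ξ`, or its weight comes from the first step, or from the step to some `ζ < η`. -/
theorem exists_of_weight_ne (hη : η ∈ C.ladder β) (hξ : ξ < η)
    (hne : C.weight ξ η ≠ C.weight ξ β) :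
    ∃ ζ ∈ insert η (C.below η β), ξ = ζ ∨
      ξ < ζ ∧ (C.weight ξ ζ ≤ (C.below η β).card ∨ C.weight ξ ζ ≠ C.weight ξ η) := by
  have hηβ := C.lt_of_mem hη
  have hξβ := hξ.trans hηβ
  refine ⟨C.next ξ β, ?_, (C.le_next hξβ).eq_or_lt.imp_right fun hlt => ⟨hlt, ?_⟩⟩
  · rw [Finset.mem_insert, C.mem_below hηβ]
    exact (C.next_le hξβ hη hξ.le).eq_or_lt.imp_right fun hlt => ⟨C.next_mem hξβ, hlt⟩
  · have card_le : (C.below ξ β).card ≤ (C.below η β).card := Finset.card_le_card fun x hx => by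
      rw [C.mem_below hξβ] at hx
      exact (C.mem_below hηβ).2 ⟨hx.1, hx.2.trans hξ⟩
    rw [C.weight_of_lt hξβ] at hne
    rcases le_total (C.weight ξ (C.next ξ β)) (C.below ξ β).card with hle | hle
    · exact Or.inl (hle.trans card_le)
    · rw [max_eq_right hle] at hne
      exact Or.inr hne.symm

theorem finite_weight_ne_of_mem (hη : η ∈ C.ladder β)
    (ih : ∀ ζ < η, {ξ | ξ < ζ ∧ C.weight ξ ζ ≠ C.weight ξ η}.Finite) :
    {ξ | ξ < η ∧ C.weight ξ η ≠ C.weight ξ β}.Finite := by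
  refine ((Finset.finite_toSet (insert η (C.below η β))).biUnion (t := fun ζ => {ζ} ∪
    ({ξ | ξ < ζ ∧ C.weight ξ ζ ≤ (C.below η β).card} ∪
      {ξ | ξ < ζ ∧ C.weight ξ ζ ≠ C.weight ξ η})) fun ζ hζ => ?_).subset ?_
  · refine (finite_singleton ζ).union ((C.finite_weight_le ζ _).union ?_)
    rcases Finset.mem_insert.1 hζ with rfl | hmem
    · simp
    · exact ih ζ ((C.mem_below (C.lt_of_mem hη)).1 hmem).2
  · rintro ξ ⟨hξ, hne⟩
    obtain ⟨ζ, hζ, h⟩ := C.exists_of_weight_ne hη hξ hne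
    refine mem_biUnion (x := ζ) hζ ?_
    rcases h with rfl | ⟨hlt, hle | hne⟩
    exacts [Or.inl rfl, Or.inr (Or.inl ⟨hlt, hle⟩), Or.inr (Or.inr ⟨hlt, hne⟩)]

theorem finite_weight_ne_of_trans (hαβ : α ≤ β)
    (h₁ : {ξ | ξ < α ∧ C.weight ξ α ≠ C.weight ξ β}.Finite)
    (h₂ : {ξ | ξ < β ∧ C.weight ξ β ≠ C.weight ξ γ}.Finite) :
    {ξ | ξ < α ∧ C.weight ξ α ≠ C.weight ξ γ}.Finite := by
  refine (h₁.union h₂).subset ?_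
  rintro ξ ⟨hξ, hne⟩
  by_cases heq : C.weight ξ α = C.weight ξ β
  · exact Or.inr ⟨hξ.trans_le hαβ, heq ▸ hne⟩
  · exact Or.inl ⟨hξ, heq⟩

theorem finite_weight_ne_of_le (h : α ≤ β) :
    {ξ | ξ < α ∧ C.weight ξ α ≠ C.weight ξ β}.Finite := by
  induction β using WellFoundedLT.induction generalizing α with
  | ind β ih =>
    rcases h.eq_or_lt with rfl | h
    · simp
    · obtain ⟨η, hη, hle⟩ := C.exists_ge h
      have hηβ := C.lt_of_mem hη
      exact C.finite_weight_ne_of_trans hle (ih η hηβ hle)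
        (C.finite_weight_ne_of_mem hη fun ζ hζ => ih η hηβ hζ.le)

theorem finite_weight_ne (hα : δ ≤ α) (hβ : δ ≤ β) :
    {ξ | ξ < δ ∧ C.weight ξ α ≠ C.weight ξ β}.Finite := by
  refine ((C.finite_weight_ne_of_le hα).union (C.finite_weight_ne_of_le hβ)).subset ?_
  rintro ξ ⟨hξ, hne⟩
  by_cases heq : C.weight ξ δ = C.weight ξ α
  · exact Or.inr ⟨hξ, heq ▸ hne⟩
  · exact Or.inl ⟨hξ, heq⟩

theorem exists_mem_ladder_weight_eq {ι : Type*} [Finite ι] (hδ : Order.IsSuccLimit δ) {s : Set Ω}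
    (hs : s.Finite) (h : ∀ x ∈ s, x < δ) {a : ι → Ω} (ha : ∀ i, δ ≤ a i) (hβ : δ ≤ β) :
    ∃ μ ∈ C.ladder δ, (∀ x ∈ s, x < μ) ∧
      ∀ i x, μ ≤ x → x < δ → C.weight x (a i) = C.weight x β := by
  obtain ⟨μ, hμ, lt_μ⟩ := C.exists_mem_ladder_of_finite hδ
    (hs.union (finite_iUnion fun i => C.finite_weight_ne (ha i) hβ)) fun x hx => by
      rcases hx with hx | hx
      · exact h x hx
      · obtain ⟨i, hi⟩ := mem_iUnion.1 hx
        exact hi.1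
  refine ⟨μ, hμ, fun x hx => lt_μ x (Or.inl hx), fun i x hμx hxδ => by_contra fun hne => ?_⟩
  exact hμx.not_gt (lt_μ x (Or.inr (mem_iUnion.2 ⟨i, hxδ, hne⟩)))

variable [OrderBot Ω]

/-- Moore's lower trace `L(α, β)`: the running maxima of `max (C_γ ∩ α)` as `γ` descends through
the points of the walk from `β` to `α`, excluding `α`. -/
noncomputable def lowerTrace (α β : Ω) : Finset Ω :=
  if _h : α < β then
    insert (C.maxBelow α β) ((lowerTrace α (C.next α β)).filter (C.maxBelow α β ≤ ·))
  else ∅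
termination_by wellFounded_lt.wrap β
decreasing_by exact C.next_lt _h

theorem lowerTrace_of_lt (h : α < β) : C.lowerTrace α β =
    insert (C.maxBelow α β) ((C.lowerTrace α (C.next α β)).filter (C.maxBelow α β ≤ ·)) := by
  rw [lowerTrace, dif_pos h]

theorem lowerTrace_self (α : Ω) : C.lowerTrace α α = ∅ := by
  rw [lowerTrace, dif_neg (lt_irrefl α)]

theorem mem_lowerTrace (h : α < β) : x ∈ C.lowerTrace α β ↔
    x = C.maxBelow α β ∨ x ∈ C.lowerTrace α (C.next α β) ∧ C.maxBelow α β ≤ x := by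
  rw [C.lowerTrace_of_lt h, Finset.mem_insert, Finset.mem_filter]

theorem maxBelow_mem_lowerTrace (h : α < β) : C.maxBelow α β ∈ C.lowerTrace α β :=
  (C.mem_lowerTrace h).2 (Or.inl rfl)

theorem lowerTrace_nonempty (h : α < β) : (C.lowerTrace α β).Nonempty :=
  ⟨_, C.maxBelow_mem_lowerTrace h⟩

theorem maxBelow_le_of_mem_lowerTrace (h : α < β) (hx : x ∈ C.lowerTrace α β) :
    C.maxBelow α β ≤ x := by
  rcases (C.mem_lowerTrace h).1 hx with rfl | ⟨-, hle⟩
  exacts [le_rfl, hle]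

theorem lt_of_mem_lowerTrace (hα : ⊥ < α) (hx : x ∈ C.lowerTrace α β) : x < α := by
  induction β using WellFoundedLT.induction with
  | ind β ih =>
    by_cases h : α < β
    · rcases (C.mem_lowerTrace h).1 hx with rfl | ⟨hmem, -⟩
      exacts [C.maxBelow_lt hα h, ih _ (C.next_lt h) hmem]
    · rw [lowerTrace, dif_neg h] at hx
      exact absurd hx (Finset.notMem_empty x)

theorem le_of_mem_lowerTrace_of_mem (hζ : ζ ∈ C.ladder δ) (hζξ : ζ < ξ) (hξδ : ξ < δ)
    (hx : x ∈ C.lowerTrace ξ δ) : ζ ≤ x :=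
  (C.le_maxBelow hξδ hζ hζξ).trans (C.maxBelow_le_of_mem_lowerTrace hξδ hx)

theorem next_eq_of_maxBelow_lt (hαβ : α ≤ β) (hβγ : β < γ) (h : C.maxBelow β γ < α) :
    C.next α γ = C.next β γ := by
  have hαγ := hαβ.trans_lt hβγ
  refine le_antisymm (C.next_le hαγ (C.next_mem hβγ) (hαβ.trans (C.le_next hβγ)))
    (C.next_le hβγ (C.next_mem hαγ) (not_lt.1 fun hlt => ?_))
  exact ((C.le_maxBelow hβγ (C.next_mem hαγ) hlt).trans_lt h).not_ge (C.le_next hαγ)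

/-- Under the hypothesis the walk from `γ` to `α` passes through `β`. -/
theorem lowerTrace_eq_union (hα : ⊥ < α) (hαβ : α ≤ β) (hβγ : β ≤ γ)
    (h : ∀ x ∈ C.lowerTrace β γ, ∀ y ∈ C.lowerTrace α β, x < y) :
    C.lowerTrace α γ = C.lowerTrace β γ ∪ C.lowerTrace α β := by
  rcases hαβ.eq_or_lt with rfl | hαβ
  · rw [lowerTrace_self, Finset.union_empty]
  induction γ using WellFoundedLT.induction with
  | ind γ ih =>
    rcases hβγ.eq_or_lt with rfl | hβγ
    · rw [lowerTrace_self, Finset.empty_union]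
    have max_lt : ∀ y ∈ C.lowerTrace α β, C.maxBelow β γ < y :=
      h _ (C.maxBelow_mem_lowerTrace hβγ)
    have max_lt_left : C.maxBelow β γ < α := by
      obtain ⟨y, hy⟩ := C.lowerTrace_nonempty hαβ
      exact (max_lt y hy).trans (C.lt_of_mem_lowerTrace hα hy)
    have max_eq : C.maxBelow α γ = C.maxBelow β γ := by
      rw [maxBelow, C.below_eq_of_maxBelow_lt hαβ.le hβγ max_lt_left, maxBelow]
    have union_next := ih (C.next β γ) (C.next_lt hβγ) (C.le_next hβγ) fun x hx y hy => by
      rcases le_or_gt (C.maxBelow β γ) x with hle | hlt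
      · exact h x ((C.mem_lowerTrace hβγ).2 (Or.inr ⟨hx, hle⟩)) y hy
      · exact hlt.trans (max_lt y hy)
    rw [C.lowerTrace_of_lt (hαβ.trans hβγ), max_eq,
      C.next_eq_of_maxBelow_lt hαβ.le hβγ max_lt_left, union_next, Finset.filter_union,
      Finset.filter_true_of_mem fun y hy => (max_lt y hy).le, ← Finset.insert_union,
      ← C.lowerTrace_of_lt hβγ]

end WellFounded

end CSequence

/-! ### Oscillation -/

section Oscillation

variable {Ω : Type*} [LinearOrder Ω] {p q : Ω → Prop} {L F : Finset Ω} {x y ξ : Ω}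

/-- `p` switches from false to true at `ξ`, along the increasing enumeration of `L`. -/
def IsRise (p : Ω → Prop) (L : Finset Ω) (ξ : Ω) : Prop :=
  p ξ ∧ ∃ η, IsGreatest {ζ | ζ ∈ L ∧ ζ < ξ} η ∧ ¬p η

open Classical in
/-- Moore's oscillation number: how often `p` switches from false to true along `L`. His
`osc(f, g; L)` is the case where `p ξ` says `g ξ < f ξ`. -/
noncomputable def osc (p : Ω → Prop) (L : Finset Ω) : ℕ := (L.filter (IsRise p L)).card

theorem isRise_congr (h : ∀ ζ ∈ L, (p ζ ↔ q ζ)) (hξ : ξ ∈ L) : IsRise p L ξ ↔ IsRise q L ξ :=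
  and_congr (h ξ hξ) <| exists_congr fun η => and_congr_right fun hη =>
    not_congr (h η hη.1.1)

theorem osc_congr (h : ∀ ζ ∈ L, (p ζ ↔ q ζ)) : osc p L = osc q L := by
  classical
  exact congrArg Finset.card (Finset.filter_congr fun ξ hξ => isRise_congr h hξ)

theorem osc_eq_zero_of_forall_not (h : ∀ ξ ∈ L, ¬p ξ) : osc p L = 0 := by
  classical
  exact Finset.card_eq_zero.2 (Finset.filter_eq_empty_iff.2 fun ξ hξ hrise => h ξ hξ hrise.1)

theorem osc_eq_zero_of_forall (h : ∀ ξ ∈ L, p ξ) : osc p L = 0 := by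
  classical
  refine Finset.card_eq_zero.2 (Finset.filter_eq_empty_iff.2 fun ξ _ hrise => ?_)
  obtain ⟨-, η, hη, hpη⟩ := hrise
  exact hpη (h η hη.1.1)

theorem isRise_union_left (h : ∀ x ∈ L, ∀ y ∈ F, x < y) (hξ : ξ ∈ L) :
    IsRise p (L ∪ F) ξ ↔ IsRise p L ξ := by
  have below_eq : {ζ | ζ ∈ L ∪ F ∧ ζ < ξ} = {ζ | ζ ∈ L ∧ ζ < ξ} := by
    ext ζ
    refine and_congr_left fun hζ => ⟨fun hmem => ?_, Finset.mem_union_left F⟩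
    exact (Finset.mem_union.1 hmem).resolve_right fun hF => lt_asymm hζ (h ξ hξ ζ hF)
  rw [IsRise, IsRise, below_eq]

theorem isGreatest_lt_union_iff (h : ∀ x ∈ L, ∀ y ∈ F, x < y) (hy : y ∈ F) (hyξ : y < ξ) :
    IsGreatest {ζ | ζ ∈ L ∪ F ∧ ζ < ξ} x ↔ IsGreatest {ζ | ζ ∈ F ∧ ζ < ξ} x := by
  constructor
  · rintro ⟨⟨hx, hxξ⟩, hmax⟩
    refine ⟨⟨(Finset.mem_union.1 hx).resolve_left fun hL => ?_, hxξ⟩,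
      fun ζ hζ => hmax ⟨Finset.mem_union_right L hζ.1, hζ.2⟩⟩
    exact (h x hL y hy).not_ge (hmax ⟨Finset.mem_union_right L hy, hyξ⟩)
  · rintro ⟨⟨hx, hxξ⟩, hmax⟩
    refine ⟨⟨Finset.mem_union_right L hx, hxξ⟩, fun ζ hζ => ?_⟩
    rcases Finset.mem_union.1 hζ.1 with hL | hF
    exacts [(h ζ hL x hx).le, hmax ⟨hF, hζ.2⟩]

theorem isGreatest_lt_union_of_isLeast (h : ∀ x ∈ L, ∀ y ∈ F, x < y)
    (hx : IsGreatest (L : Set Ω) x) (hy : IsLeast (F : Set Ω) y) :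
    IsGreatest {ζ | ζ ∈ L ∪ F ∧ ζ < y} x := by
  refine ⟨⟨Finset.mem_union_left F hx.1, h x hx.1 y hy.1⟩, fun ζ hζ => ?_⟩
  rcases Finset.mem_union.1 hζ.1 with hL | hF
  exacts [hx.2 hL, absurd (hy.2 hF) hζ.2.not_ge]

theorem not_isRise_of_isLeast (hy : IsLeast (F : Set Ω) y) : ¬IsRise p F y :=
  fun ⟨_, _, hη, _⟩ => hη.1.2.not_ge (hy.2 hη.1.1)

theorem isRise_union_right (h : ∀ x ∈ L, ∀ y ∈ F, x < y) (hx : IsGreatest (L : Set Ω) x)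
    (hy : IsLeast (F : Set Ω) y) (hξ : ξ ∈ F) :
    IsRise p (L ∪ F) ξ ↔ IsRise p F ξ ∨ ξ = y ∧ ¬p x ∧ p y := by
  rcases (hy.2 hξ).eq_or_lt with rfl | hlt
  · have greatest := isGreatest_lt_union_of_isLeast h hx hy
    constructor
    · rintro ⟨hp, η, hη, hpη⟩
      exact Or.inr ⟨rfl, hη.unique greatest ▸ hpη, hp⟩
    · rintro (hrise | ⟨-, hpx, hpy⟩)
      exacts [absurd hrise (not_isRise_of_isLeast hy), ⟨hpy, x, greatest, hpx⟩]
  · simp only [IsRise, isGreatest_lt_union_iff h hy.1 hlt, hlt.ne', false_and, or_false]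

open Classical in
theorem osc_union (h : ∀ x ∈ L, ∀ y ∈ F, x < y) (hx : IsGreatest (L : Set Ω) x)
    (hy : IsLeast (F : Set Ω) y) :
    osc p (L ∪ F) = osc p L + osc p F + if ¬p x ∧ p y then 1 else 0 := by
  have disjoint_LF : Disjoint L F :=
    Finset.disjoint_left.2 fun z hzL hzF => lt_irrefl z (h z hzL z hzF)
  rw [osc, Finset.filter_union, Finset.card_union_of_disjoint
    (Finset.disjoint_filter_filter disjoint_LF), add_assoc]
  congr 1
  · exact congrArg Finset.card (Finset.filter_congr fun ξ hξ => isRise_union_left h hξ)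
  rw [Finset.filter_congr fun ξ hξ => isRise_union_right h hx hy hξ, Finset.filter_or, osc]
  split_ifs with hjump
  · rw [Finset.card_union_of_disjoint]
    · simp [hjump, Finset.filter_eq', Finset.mem_coe.1 hy.1]
    · exact Finset.disjoint_filter.2 fun ξ _ hrise hξ =>
        not_isRise_of_isLeast hy (hξ.1 ▸ hrise)
  · simp [hjump]

theorem osc_union_of_last (h : ∀ x ∈ L, ∀ y ∈ F, x < y) (hx : IsGreatest (L : Set Ω) x)
    (hpx : p x) (hF : F.Nonempty) : osc p (L ∪ F) = osc p L + osc p F := by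
  rw [osc_union h hx (F.isLeast_min' hF), if_neg fun hjump => hjump.1 hpx, add_zero]

theorem osc_union_of_forall_not (h : ∀ x ∈ L, ∀ y ∈ F, x < y) (hL : L.Nonempty)
    (hF : F.Nonempty) (hpF : ∀ y ∈ F, ¬p y) : osc p (L ∪ F) = osc p L := by
  rw [osc_union h (L.isGreatest_max' hL) (F.isLeast_min' hF), osc_eq_zero_of_forall_not hpF,
    if_neg fun hjump => hpF _ (F.min'_mem hF) hjump.2, add_zero, add_zero]

theorem osc_union_of_last_not (h : ∀ x ∈ L, ∀ y ∈ F, x < y) (hx : IsGreatest (L : Set Ω) x)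
    (hpx : ¬p x) (hF : F.Nonempty) (hpF : ∀ y ∈ F, p y) : osc p (L ∪ F) = osc p L + 1 := by
  rw [osc_union h hx (F.isLeast_min' hF), osc_eq_zero_of_forall hpF,
    if_pos ⟨hpx, hpF _ (F.min'_mem hF)⟩]

theorem isGreatest_coe_union (h : ∀ x ∈ L, ∀ y ∈ F, x < y) (hy : IsGreatest (F : Set Ω) y) :
    IsGreatest ((L ∪ F : Finset Ω) : Set Ω) y := by
  refine ⟨Finset.mem_union_right L hy.1, fun x hx => ?_⟩
  rcases Finset.mem_union.1 hx with hL | hF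
  exacts [(h x hL y hy.1).le, hy.2 hF]

end Oscillation

/-! ### Closed unbounded sets -/

section ClubFilter

variable {Ω : Type*} [LinearOrder Ω]

/-- The filter of subsets of `Ω` containing all limit points closed under some function `Ω → Ω`.
On `ω₁` this is the club filter. -/
def clubFilter (Ω : Type*) [LinearOrder Ω] : Filter Ω where
  sets := {s | ∃ g : Ω → Ω, ∀ δ, Order.IsSuccLimit δ → (∀ x < δ, g x < δ) → δ ∈ s}
  univ_sets := ⟨id, fun _ _ _ => mem_univ _⟩
  sets_of_superset := fun ⟨g, hg⟩ hst => ⟨g, fun δ hδ hclosed => hst (hg δ hδ hclosed)⟩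
  inter_sets := fun ⟨f, hf⟩ ⟨g, hg⟩ => ⟨fun x => max (f x) (g x), fun δ hδ hclosed =>
    ⟨hf δ hδ fun x hx => (le_max_left _ _).trans_lt (hclosed x hx),
      hg δ hδ fun x hx => (le_max_right _ _).trans_lt (hclosed x hx)⟩⟩

theorem eventually_isSuccLimit : ∀ᶠ δ in clubFilter Ω, Order.IsSuccLimit δ :=
  ⟨id, fun _ hδ _ => hδ⟩

theorem eventually_forall_lt (g : Ω → Ω) : ∀ᶠ δ in clubFilter Ω, ∀ x < δ, g x < δ :=
  ⟨g, fun _ _ hclosed => hclosed⟩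

variable [∀ a : Ω, Countable (Iio a)]

theorem countable_Iic (x : Ω) : (Iic x).Countable := by
  rw [← Iio_insert]
  exact (to_countable (Iio x)).insert x

variable [Uncountable Ω]

theorem exists_forall_lt_of_countable {s : Set Ω} (hs : s.Countable) : ∃ b, ∀ x ∈ s, x < b := by
  obtain ⟨b, hb⟩ := (ne_univ_iff_exists_notMem _).1 fun h : ⋃ x ∈ s, Iic x = univ =>
    not_countable_univ (h ▸ hs.biUnion fun x _ => countable_Iic x)
  exact ⟨b, fun x hx => not_le.1 fun hle => hb (mem_biUnion hx hle)⟩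

theorem exists_forall_lt_of_finite {ι : Type*} [Finite ι] (a : ι → Ω) : ∃ b, ∀ i, a i < b := by
  obtain ⟨b, hb⟩ := exists_forall_lt_of_countable (countable_range a)
  exact ⟨b, fun i => hb _ (mem_range_self i)⟩

theorem eventually_exists_lt {Y : Ω → Type*} [∀ μ, Countable (Y μ)] (S : ∀ μ, Y μ → Set Ω) :
    ∀ᶠ δ in clubFilter Ω, ∀ μ < δ, ∀ y, (S μ y).Nonempty → ∃ s ∈ S μ y, s < δ := by
  have bound (μ : Ω) : ∃ b, ∀ y, (S μ y).Nonempty → ∃ s ∈ S μ y, s < b := by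
    choose f hf using fun y : {y // (S μ y).Nonempty} => y.2
    obtain ⟨b, hb⟩ := exists_forall_lt_of_countable (countable_range f)
    exact ⟨b, fun y hy => ⟨f ⟨y, hy⟩, hf ⟨y, hy⟩, hb _ (mem_range_self _)⟩⟩
  choose b hb using bound
  filter_upwards [eventually_forall_lt b] with δ hδ μ hμ y hy
  obtain ⟨s, hs, hlt⟩ := hb μ y hy
  exact ⟨s, hs, hlt.trans (hδ μ hμ)⟩

theorem eventually_not_bddAbove {Y : Ω → Type*} [∀ μ, Countable (Y μ)] (S : ∀ μ, Y μ → Set Ω) :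
    ∀ᶠ δ in clubFilter Ω, ∀ μ < δ, ∀ y, ∀ s ∈ S μ y, δ ≤ s → ¬BddAbove (S μ y) := by
  filter_upwards [eventually_exists_lt fun μ y => upperBounds (S μ y)]
    with δ hδ μ hμ y s hs hle hbdd
  obtain ⟨v, hv, hlt⟩ := hδ μ hμ y hbdd
  exact (hlt.trans_le hle).not_ge (hv hs)

instance [WellFoundedLT Ω] : (clubFilter Ω).NeBot := by
  refine ⟨fun h => ?_⟩
  obtain ⟨g, hg⟩ : ∅ ∈ clubFilter Ω := h ▸ mem_bot
  have bound (x : Ω) : ∃ b, x < b ∧ ∀ y ≤ x, g y < b := by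
    obtain ⟨b, hb⟩ := exists_forall_lt_of_countable
      (((to_countable (Iio x)).image g).union (to_countable {x, g x}))
    refine ⟨b, hb x (by simp), fun y hy => ?_⟩
    rcases hy.eq_or_lt with rfl | hlt
    exacts [hb _ (by simp), hb _ (Or.inl (mem_image_of_mem g hlt))]
  choose next lt_next g_lt_next using bound
  let s : ℕ → Ω := fun n => next^[n] (Classical.arbitrary Ω)
  have s_succ (n : ℕ) : s (n + 1) = next (s n) := Function.iterate_succ_apply' next n _
  have s_mono : StrictMono s := strictMono_nat_of_lt_succ fun n => s_succ n ▸ lt_next (s n)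
  obtain ⟨u, hu⟩ := exists_forall_lt_of_countable (countable_range s)
  obtain ⟨δ, hδ⟩ : ∃ δ, IsLUB (range s) δ :=
    ⟨_, minimal_iff_isLeast.1 <| WellFounded.minimal_wellFounded_lt_min
      (s := upperBounds (range s)) ⟨u, fun x hx => (hu x hx).le⟩⟩
  have s_lt (n : ℕ) : s n < δ := (s_mono n.lt_succ_self).trans_le (hδ.1 (mem_range_self _))
  refine hg δ (hδ.isSuccLimit_of_notMem (range_nonempty s) ?_) fun x hx => ?_
  · rintro ⟨n, rfl⟩
    exact lt_irrefl _ (s_lt n)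
  · obtain ⟨_, ⟨n, rfl⟩, hxn⟩ := (lt_isLUB_iff hδ).1 hx
    exact (s_succ n ▸ g_lt_next (s n) x hxn.le).trans (s_lt (n + 1))

end ClubFilter

/-! ### The tree of restricted weight functions -/

theorem countable_finite_ne {X Y : Type*} [Countable X] [Countable Y] (g : X → Y) :
    {f : X → Y | {x | f x ≠ g x}.Finite}.Countable := by
  classical
  refine (countable_range fun (p : Σ F : Finset X, F → Y) x =>
    if hx : x ∈ p.1 then p.2 ⟨x, hx⟩ else g x).mono fun f hf => ?_
  refine ⟨⟨hf.toFinset, fun x => f x⟩, funext fun x => ?_⟩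
  by_cases hx : f x = g x <;> simp [hx]

namespace CSequence

variable {Ω : Type*} [LinearOrder Ω] [WellFoundedLT Ω] (C : CSequence Ω) {μ α β : Ω}

/-- Level `μ` of the Aronszajn tree of `C`: the restrictions of the functions `weight · α` to the
initial segment below `μ`. -/
def Node (μ : Ω) : Type _ := range fun α => (Iio μ).domRestrict (C.weight · α)

/-- The restriction of `weight · α` to the initial segment below `μ`. -/
noncomputable def node (μ α : Ω) : C.Node μ := ⟨_, mem_range_self α⟩

theorem node_eq_iff : C.node μ α = C.node μ β ↔ ∀ x < μ, C.weight x α = C.weight x β :=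
  Subtype.ext_iff.trans <| funext_iff.trans Subtype.forall

/-- Only countably many `α` lie below `μ`; by coherence, all others give finite modifications of
one function. -/
instance [∀ a : Ω, Countable (Iio a)] (μ : Ω) : Countable (C.Node μ) := by
  let r : Ω → Iio μ → ℕ := fun α => (Iio μ).domRestrict (C.weight · α)
  refine (((to_countable (Iio μ)).image r).union (countable_finite_ne (r μ))).mono ?_
  rintro _ ⟨α, rfl⟩
  rcases lt_or_ge α μ with hlt | hle
  · exact Or.inl (mem_image_of_mem r hlt)
  · refine Or.inr (Finite.of_finite_image ((C.finite_weight_ne hle le_rfl).subset ?_)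
      Subtype.val_injective.injOn)
    rintro _ ⟨x, hx, rfl⟩
    exact ⟨x.2, hx⟩

section Avoidance

variable {ι : Type*} [Finite ι] [∀ a : Ω, Countable (Iio a)] [Uncountable Ω]

theorem exists_forall_lt_weight_of_nat (A : Set (ι → Ω)) (hA : ∀ ζ, ∃ a ∈ A, ∀ i, ζ < a i) (n : ℕ) :
    ∃ v, ∀ F : Finset Ω, (∀ x ∈ F, v < x) → ∀ ζ, ∃ a ∈ A,
      ∀ i, ζ < a i ∧ ∀ x ∈ F, n < C.weight x (a i) := by
  by_contra! hcon
  choose F hF ζ hbad using hcon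
  choose g hg using fun v => exists_forall_lt_of_countable (F v).countable_toSet
  obtain ⟨δ, hδ, hclosed⟩ := (eventually_isSuccLimit.and (eventually_forall_lt g)).exists
  obtain ⟨z, hz⟩ := exists_forall_lt_of_countable (((to_countable (Iio δ)).image ζ).insert δ)
  obtain ⟨a, ha, hza⟩ := hA z
  have light_finite : (⋃ i, {x | x < δ ∧ C.weight x (a i) ≤ n}).Finite :=
    finite_iUnion fun i => (C.finite_weight_le (a i) n).subset fun x hx =>
      ⟨hx.1.trans ((hz δ (mem_insert _ _)).trans (hza i)), hx.2⟩
  obtain ⟨v, hv, hle⟩ := exists_lt_forall_le_of_finite hδ light_finite fun x hx => by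
    obtain ⟨i, hi⟩ := mem_iUnion.1 hx
    exact hi.1
  obtain ⟨i, hi⟩ := hbad v a ha
  obtain ⟨x, hx, hweight⟩ := hi ((hz _ (Or.inr (mem_image_of_mem ζ hv))).trans (hza i))
  exact (hF v x hx).not_ge
    (hle x (mem_iUnion.2 ⟨i, (hg v x hx).trans (hclosed v hv), hweight⟩))

theorem exists_forall_lt_weight (A : Set (ι → Ω)) (hA : ∀ ζ, ∃ a ∈ A, ∀ i, ζ < a i) :
    ∃ v, ∀ F : Finset Ω, (∀ x ∈ F, v < x) → ∀ n ζ, ∃ a ∈ A,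
      ∀ i, ζ < a i ∧ ∀ x ∈ F, n < C.weight x (a i) := by
  choose v hv using C.exists_forall_lt_weight_of_nat A hA
  obtain ⟨w, hw⟩ := exists_forall_lt_of_countable (countable_range v)
  exact ⟨w, fun F hF n => hv n F fun x hx => (hw _ (mem_range_self n)).trans (hF x hx)⟩

end Avoidance
end CSequence

/-! ### Moore's oscillation theorem -/

namespace CSequence

variable {Ω ι : Type*} [LinearOrder Ω] [WellFoundedLT Ω] (C : CSequence Ω)

/-- The point `ξ` has larger weight from `α` than from `β`. -/
def Heavier (α β ξ : Ω) : Prop := C.weight ξ β < C.weight ξ α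

variable {C} in
theorem heavier_congr {α β α' β' ξ : Ω} (hα : C.weight ξ α = C.weight ξ α')
    (hβ : C.weight ξ β = C.weight ξ β') : C.Heavier α β ξ ↔ C.Heavier α' β' ξ := by
  rw [Heavier, Heavier, hα, hβ]

section Reflection

variable [Finite ι] [∀ a : Ω, Countable (Iio a)] [Uncountable Ω] (A : Set (ι → Ω))

theorem eventually_exists_lt_node :
    ∀ᶠ δ in clubFilter Ω, ∀ μ < δ, ∀ a ∈ A, (∀ i, δ ≤ a i) →
      ∃ a' ∈ A, ∀ i, μ < a' i ∧ a' i < δ ∧ C.node μ (a' i) = C.node μ (a i) := by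
  filter_upwards [eventually_exists_lt (Y := fun μ => ι → C.Node μ) fun μ y =>
    {s | ∃ a ∈ A, ∀ i, μ < a i ∧ a i < s ∧ C.node μ (a i) = y i}] with δ hδ μ hμ a ha hle
  obtain ⟨b, hb⟩ := exists_forall_lt_of_finite a
  obtain ⟨s, ⟨a', ha', h⟩, hs⟩ := hδ μ hμ (fun i => C.node μ (a i))
    ⟨b, a, ha, fun i => ⟨hμ.trans_le (hle i), hb i, rfl⟩⟩
  exact ⟨a', ha', fun i => ⟨(h i).1, (h i).2.1.trans hs, (h i).2.2⟩⟩

theorem eventually_exists_lt_weight :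
    ∀ᶠ δ in clubFilter Ω, ∀ μ < δ, ∀ a ∈ A, (∀ i, δ ≤ a i) →
      ∃ v < δ, ∀ F : Finset Ω, (∀ x ∈ F, v < x) → ∀ n ζ, ∃ a' ∈ A,
        ∀ i, ζ < a' i ∧ C.node μ (a' i) = C.node μ (a i) ∧ ∀ x ∈ F, n < C.weight x (a' i) := by
  let A' (μ : Ω) (y : ι → C.Node μ) : Set (ι → Ω) := {a | a ∈ A ∧ ∀ i, C.node μ (a i) = y i}
  filter_upwards [
    eventually_not_bddAbove fun μ (y : ι → C.Node μ) => {s | ∃ a ∈ A' μ y, ∀ i, s ≤ a i},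
    eventually_exists_lt fun μ (y : ι → C.Node μ) => {v | ∀ F : Finset Ω, (∀ x ∈ F, v < x) →
      ∀ n ζ, ∃ a ∈ A' μ y, ∀ i, ζ < a i ∧ ∀ x ∈ F, n < C.weight x (a i)}]
    with δ hunbounded hlt μ hμ a ha hle
  let y : ι → C.Node μ := fun i => C.node μ (a i)
  have A'_unbounded (ζ : Ω) : ∃ a' ∈ A' μ y, ∀ i, ζ < a' i := by
    obtain ⟨s, ⟨a', ha', hs⟩, hζs⟩ := not_bddAbove_iff.1
      (hunbounded μ hμ y δ ⟨a, ⟨ha, fun i => rfl⟩, hle⟩ le_rfl) ζ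
    exact ⟨a', ha', fun i => hζs.trans_le (hs i)⟩
  obtain ⟨v, hv, hvδ⟩ := hlt μ hμ y (C.exists_forall_lt_weight (A' μ y) A'_unbounded)
  refine ⟨v, hvδ, fun F hF n ζ => ?_⟩
  obtain ⟨a', ⟨ha', hnode⟩, h⟩ := hv F hF n ζ
  exact ⟨a', ha', fun i => ⟨(h i).1, hnode i, (h i).2⟩⟩

end Reflection

variable [OrderBot Ω]

/-- Moore's `osc(α, β)`: the oscillation of the weights from `α` and from `β` along the lower
trace of the walk from `β` to `α`. -/
noncomputable def oscillation (α β : Ω) : ℕ := osc (C.Heavier α β) (C.lowerTrace α β)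

/-- The point `μ` separates the lower trace of the walk from `b` to `δ` from the lower traces of
the walks from `δ`, and above `μ` the weights from the `a i` and from `b` agree. -/
structure SplitsAt (μ δ : Ω) (a : ι → Ω) (b : Ω) : Prop where
  le_left : ∀ i, δ ≤ a i
  lt_right : δ < b
  lt_of_mem : ∀ x ∈ C.lowerTrace δ b, x < μ
  le_of_mem : ∀ ξ, μ < ξ → ξ < δ → ∀ x ∈ C.lowerTrace ξ δ, μ ≤ x
  weight_eq : ∀ i x, μ ≤ x → x < δ → C.weight x (a i) = C.weight x b

/-- A point `δ` reflecting the properties of the tuples in `A` and the points in `B` that lie above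
it. This replaces the traces on `ω₁` of countable elementary submodels in Moore's proof. -/
structure IsReflecting (A : Set (ι → Ω)) (B : Set Ω) (δ : Ω) : Prop where
  isSuccLimit : Order.IsSuccLimit δ
  exists_lt : ∀ μ < δ, ∀ a ∈ A, (∀ i, δ ≤ a i) →
    ∃ a' ∈ A, ∀ i, μ < a' i ∧ a' i < δ ∧ C.node μ (a' i) = C.node μ (a i)
  exists_lt_weight : ∀ μ < δ, ∀ a ∈ A, (∀ i, δ ≤ a i) →
    ∃ v < δ, ∀ F : Finset Ω, (∀ x ∈ F, v < x) → ∀ n ζ, ∃ a' ∈ A,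
      ∀ i, ζ < a' i ∧ C.node μ (a' i) = C.node μ (a i) ∧ ∀ x ∈ F, n < C.weight x (a' i)
  exists_splitsAt : ∀ μ < δ, ∀ a ∈ A, ∀ b ∈ B, C.SplitsAt μ δ a b → ∀ ζ, ∃ δ' > ζ,
    ∃ a' ∈ A, ∃ b' ∈ B, C.SplitsAt μ δ' a' b' ∧ C.lowerTrace δ' b' = C.lowerTrace δ b ∧
      (∀ i, C.node μ (a' i) = C.node μ (a i)) ∧ C.node μ b' = C.node μ b

section Existence

variable [Finite ι] [∀ a : Ω, Countable (Iio a)] [Uncountable Ω] (A : Set (ι → Ω)) (B : Set Ω)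

theorem eventually_exists_splitsAt :
    ∀ᶠ δ in clubFilter Ω, ∀ μ < δ, ∀ a ∈ A, ∀ b ∈ B, C.SplitsAt μ δ a b → ∀ ζ, ∃ δ' > ζ,
      ∃ a' ∈ A, ∃ b' ∈ B, C.SplitsAt μ δ' a' b' ∧ C.lowerTrace δ' b' = C.lowerTrace δ b ∧
        (∀ i, C.node μ (a' i) = C.node μ (a i)) ∧ C.node μ b' = C.node μ b := by
  filter_upwards [eventually_not_bddAbove
    fun μ (y : Finset (Iio μ) × (ι → C.Node μ) × C.Node μ) => {δ | ∃ a ∈ A, ∃ b ∈ B,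
      C.SplitsAt μ δ a b ∧ C.lowerTrace δ b = y.1.map (Function.Embedding.subtype _) ∧
        (∀ i, C.node μ (a i) = y.2.1 i) ∧ C.node μ b = y.2.2}] with δ hδ μ hμ a ha b hb hsplit
  have trace_eq := Finset.subtype_map_of_mem (p := (· ∈ Iio μ)) hsplit.lt_of_mem
  have unbounded := hδ μ hμ
    ((C.lowerTrace δ b).subtype (· ∈ Iio μ), fun i => C.node μ (a i), C.node μ b)
    δ ⟨a, ha, b, hb, hsplit, trace_eq.symm, fun i => rfl, rfl⟩ le_rfl
  intro ζ
  obtain ⟨δ', ⟨a', ha', b', hb', hsplit', htrace, hnode⟩, hlt⟩ := not_bddAbove_iff.1 unbounded ζ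
  exact ⟨δ', hlt, a', ha', b', hb', hsplit', htrace.trans trace_eq, hnode⟩

theorem exists_isReflecting : ∃ δ, C.IsReflecting A B δ := by
  obtain ⟨δ, hlim, hlt, hweight, hsplit⟩ := (eventually_isSuccLimit.and <|
    (C.eventually_exists_lt_node A).and <| (C.eventually_exists_lt_weight A).and <|
    C.eventually_exists_splitsAt A B).exists
  exact ⟨δ, hlim, hlt, hweight, hsplit⟩

end Existence

/-- The pair `a', b'` repeats the weights of `a, b` along the lower trace of the walk from `b` to
`δ`, and the lower trace of the walk from `b'` to `δ` continues this trace by `F`. -/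
structure IsEndExtension (δ : Ω) (a : ι → Ω) (b : Ω) (a' : ι → Ω) (b' : Ω) (F : Finset Ω) :
    Prop where
  le_left : ∀ i, δ ≤ a' i
  lt_right : δ < b'
  nonempty : F.Nonempty
  lt_of_mem : ∀ x ∈ C.lowerTrace δ b, ∀ y ∈ F, x < y
  lowerTrace_eq : C.lowerTrace δ b' = C.lowerTrace δ b ∪ F
  weight_left : ∀ i, ∀ x ∈ C.lowerTrace δ b, C.weight x (a' i) = C.weight x (a i)
  weight_right : ∀ x ∈ C.lowerTrace δ b, C.weight x b' = C.weight x b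

/-- Along the walk from `b` to `δ`, the oscillation of `a i` and `b` is `k i`, and `a i` is the
heavier one at the end, so that a continuation of the walk does not start with a rise. -/
structure HasOscAbove (δ : Ω) (a : ι → Ω) (b : Ω) (k : ι → ℕ) : Prop where
  lt_right : δ < b
  osc_eq : ∀ i, osc (C.Heavier (a i) b) (C.lowerTrace δ b) = k i
  last_heavier : ∀ i, ∃ x, IsGreatest (C.lowerTrace δ b : Set Ω) x ∧ C.Heavier (a i) b x

variable {C} {A : Set (ι → Ω)} {B : Set Ω} {δ b b' : Ω} {a a' : ι → Ω} {F : Finset Ω} {k : ι → ℕ}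

theorem HasOscAbove.congr (h : C.HasOscAbove δ a b k)
    (hweight : ∀ i, ∀ x ∈ C.lowerTrace δ b, C.weight x (a' i) = C.weight x (a i)) :
    C.HasOscAbove δ a' b k where
  lt_right := h.lt_right
  osc_eq i := (osc_congr fun x hx => heavier_congr (hweight i x hx) rfl).trans (h.osc_eq i)
  last_heavier i := by
    obtain ⟨x, hx, hheavier⟩ := h.last_heavier i
    exact ⟨x, hx, (heavier_congr (hweight i x hx.1) rfl).2 hheavier⟩

theorem HasOscAbove.oscillation_eq {α : Ω} {i : ι} (h : C.HasOscAbove δ a b k) (hα : ⊥ < α)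
    (hαδ : α < δ) (hlt : ∀ x ∈ C.lowerTrace δ b, ∀ y ∈ C.lowerTrace α δ, x < y)
    (hweight : ∀ x ∈ C.lowerTrace δ b, C.weight x α = C.weight x (a i)) :
    C.oscillation α b = k i + osc (C.Heavier α b) (C.lowerTrace α δ) := by
  obtain ⟨x, hx, hheavier⟩ := h.last_heavier i
  rw [oscillation, C.lowerTrace_eq_union hα hαδ.le h.lt_right.le hlt,
    osc_union_of_last hlt hx ((heavier_congr (hweight x hx.1) rfl).2 hheavier)
      (C.lowerTrace_nonempty hαδ),
    osc_congr fun x hx => heavier_congr (hweight x hx) rfl, h.osc_eq]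

namespace IsReflecting

/-- A suitable `μ` in `C_δ` lies above the finitely many points at which coherence fails, so
`a, b` split at `μ`. Reflecting this to some `δ' > δ`, the lower trace of the walk from `b'` to
`δ` continues past `δ'` by the lower trace of the walk from `δ'` to `δ`. -/
theorem exists_endExtension_weight_eq [Finite ι] (hδ : C.IsReflecting A B δ) (ha : a ∈ A)
    (hb : b ∈ B) (hle : ∀ i, δ ≤ a i) (hlt : δ < b) {γ : Ω} (hγ : γ < δ) :
    ∃ a' ∈ A, ∃ b' ∈ B, ∃ F, C.IsEndExtension δ a b a' b' F ∧ (∀ x ∈ F, γ < x) ∧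
      ∀ i, ∀ x ∈ F, C.weight x (a' i) = C.weight x b' := by
  have bot_lt := hδ.isSuccLimit.bot_lt
  obtain ⟨μ, hμ, lt_μ, weight_eq⟩ := C.exists_mem_ladder_weight_eq hδ.isSuccLimit
    (s := insert γ (C.lowerTrace δ b : Set Ω)) ((Finset.finite_toSet _).insert γ)
    (forall_mem_insert.2 ⟨hγ, fun x => C.lt_of_mem_lowerTrace bot_lt⟩) hle hlt.le
  have trace_lt : ∀ x ∈ C.lowerTrace δ b, x < μ := fun x hx => lt_μ x (mem_insert_of_mem γ hx)
  have splits : C.SplitsAt μ δ a b := ⟨hle, hlt, trace_lt,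
    fun ξ hμξ hξδ x => C.le_of_mem_lowerTrace_of_mem hμ hμξ hξδ, weight_eq⟩
  obtain ⟨δ', hδ', a', ha', b', hb', splits', trace_eq, node_left, node_right⟩ :=
    hδ.exists_splitsAt μ (C.lt_of_mem hμ) a ha b hb splits δ
  have le_new : ∀ x ∈ C.lowerTrace δ δ', μ ≤ x := splits'.le_of_mem δ (C.lt_of_mem hμ) hδ'
  have old_lt_new : ∀ x ∈ C.lowerTrace δ b, ∀ y ∈ C.lowerTrace δ δ', x < y :=
    fun x hx y hy => (trace_lt x hx).trans_le (le_new y hy)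
  refine ⟨a', ha', b', hb', C.lowerTrace δ δ',
    ⟨fun i => hδ'.le.trans (splits'.le_left i), hδ'.trans splits'.lt_right,
      C.lowerTrace_nonempty hδ', old_lt_new, ?_,
      fun i x hx => C.node_eq_iff.1 (node_left i) x (trace_lt x hx),
      fun x hx => C.node_eq_iff.1 node_right x (trace_lt x hx)⟩,
    fun x hx => (lt_μ γ (mem_insert γ _)).trans_le (le_new x hx),
    fun i x hx => splits'.weight_eq i x (le_new x hx)
      ((C.lt_of_mem_lowerTrace bot_lt hx).trans hδ')⟩
  rw [C.lowerTrace_eq_union bot_lt hδ'.le splits'.lt_right.le (trace_eq ▸ old_lt_new), trace_eq]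

theorem exists_endExtension_heavier [Finite ι] (hδ : C.IsReflecting A B δ) (ha : a ∈ A)
    (hb : b ∈ B) (hle : ∀ i, δ ≤ a i) (hlt : δ < b) :
    ∃ a' ∈ A, ∃ b' ∈ B, ∃ F, C.IsEndExtension δ a b a' b' F ∧
      ∀ i, ∀ x ∈ F, C.Heavier (a' i) b' x := by
  obtain ⟨μ, hμ, lt_μ⟩ := C.exists_mem_ladder_of_finite hδ.isSuccLimit
    (Finset.finite_toSet (C.lowerTrace δ b)) fun x => C.lt_of_mem_lowerTrace hδ.isSuccLimit.bot_lt
  obtain ⟨v, hv, make_heavy⟩ := hδ.exists_lt_weight μ (C.lt_of_mem hμ) a ha hle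
  obtain ⟨a₁, -, b', hb', F, ext, v_lt, -⟩ := hδ.exists_endExtension_weight_eq ha hb hle hlt hv
  obtain ⟨a', ha', h⟩ := make_heavy F v_lt (F.sup (C.weight · b')) δ
  exact ⟨a', ha', b', hb', F, ⟨fun i => (h i).1.le, ext.lt_right, ext.nonempty, ext.lt_of_mem,
      ext.lowerTrace_eq, fun i x hx => C.node_eq_iff.1 (h i).2.1 x (lt_μ x hx), ext.weight_right⟩,
    fun i x hx => (Finset.le_sup (f := (C.weight · b')) hx).trans_lt ((h i).2.2 x hx)⟩

/-- Continue the trace first by points of equal weight, then by points where `a` is heavier: this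
creates exactly one new rise. -/
theorem exists_hasOscAbove_succ [Finite ι] (hδ : C.IsReflecting A B δ) (ha : a ∈ A) (hb : b ∈ B)
    (hle : ∀ i, δ ≤ a i) (hlt : δ < b)
    (hk : ∀ i, osc (C.Heavier (a i) b) (C.lowerTrace δ b) = k i) :
    ∃ a' ∈ A, ∃ b' ∈ B, (∀ i, δ ≤ a' i) ∧ C.HasOscAbove δ a' b' (fun i => k i + 1) ∧
      C.lowerTrace δ b ⊆ C.lowerTrace δ b' ∧
      ∀ i, ∀ x ∈ C.lowerTrace δ b, C.weight x (a' i) = C.weight x (a i) := by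
  obtain ⟨a₁, ha₁, b₁, hb₁, F₁, ext₁, -, eq₁⟩ :=
    hδ.exists_endExtension_weight_eq ha hb hle hlt hδ.isSuccLimit.bot_lt
  obtain ⟨a₂, ha₂, b₂, hb₂, F₂, ext₂, heavier₂⟩ :=
    hδ.exists_endExtension_heavier ha₁ hb₁ ext₁.le_left ext₁.lt_right
  have subset₁ : C.lowerTrace δ b ⊆ C.lowerTrace δ b₁ :=
    ext₁.lowerTrace_eq ▸ Finset.subset_union_left
  have subset₂ : C.lowerTrace δ b₁ ⊆ C.lowerTrace δ b₂ :=
    ext₂.lowerTrace_eq ▸ Finset.subset_union_left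
  have mem₁ : ∀ x ∈ F₁, x ∈ C.lowerTrace δ b₁ :=
    fun x hx => ext₁.lowerTrace_eq ▸ Finset.mem_union_right _ hx
  have weight_left (i) (x) (hx : x ∈ C.lowerTrace δ b) : C.weight x (a₂ i) = C.weight x (a i) :=
    (ext₂.weight_left i x (subset₁ hx)).trans (ext₁.weight_left i x hx)
  have weight_right (x) (hx : x ∈ C.lowerTrace δ b) : C.weight x b₂ = C.weight x b :=
    (ext₂.weight_right x (subset₁ hx)).trans (ext₁.weight_right x hx)
  have not_heavier₁ (i) (x) (hx : x ∈ F₁) : ¬C.Heavier (a₂ i) b₂ x := by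
    rw [heavier_congr (ext₂.weight_left i x (mem₁ x hx)) (ext₂.weight_right x (mem₁ x hx)),
      Heavier, eq₁ i x hx]
    exact lt_irrefl _
  have last₁ : IsGreatest (C.lowerTrace δ b₁ : Set Ω) (F₁.max' ext₁.nonempty) :=
    ext₁.lowerTrace_eq ▸ isGreatest_coe_union ext₁.lt_of_mem (F₁.isGreatest_max' _)
  refine ⟨a₂, ha₂, b₂, hb₂, ext₂.le_left, ⟨ext₂.lt_right, fun i => ?_, fun i => ?_⟩,
    subset₁.trans subset₂, weight_left⟩
  · rw [ext₂.lowerTrace_eq, osc_union_of_last_not ext₂.lt_of_mem last₁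
        (not_heavier₁ i _ (F₁.max'_mem _)) ext₂.nonempty (heavier₂ i),
      ext₁.lowerTrace_eq, osc_union_of_forall_not ext₁.lt_of_mem (C.lowerTrace_nonempty hlt)
        ext₁.nonempty (not_heavier₁ i), ← hk i,
      osc_congr fun x hx => heavier_congr (weight_left i x hx) (weight_right x hx)]
  · exact ⟨F₂.max' ext₂.nonempty, ext₂.lowerTrace_eq ▸
      isGreatest_coe_union ext₂.lt_of_mem (F₂.isGreatest_max' _), heavier₂ i _ (F₂.max'_mem _)⟩

theorem exists_forall_hasOscAbove [Finite ι] (hδ : C.IsReflecting A B δ)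
    (hA : ∃ a ∈ A, ∀ i, δ ≤ a i) (hB : ∃ b ∈ B, δ < b) (n : ℕ) :
    ∃ a ∈ A, (∀ i, δ ≤ a i) ∧ ∃ (b : ℕ → Ω) (c : ι → ℕ), ∀ m ≤ n, b m ∈ B ∧
      C.HasOscAbove δ a (b m) (fun i => c i + m) ∧
      C.lowerTrace δ (b m) ⊆ C.lowerTrace δ (b n) := by
  induction n with
  | zero =>
    obtain ⟨a, ha, hle⟩ := hA
    obtain ⟨b, hb, hlt⟩ := hB
    obtain ⟨a', ha', b', hb', hle', hosc, -⟩ :=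
      hδ.exists_hasOscAbove_succ ha hb hle hlt fun i => rfl
    refine ⟨a', ha', hle', fun _ => b',
      fun i => osc (C.Heavier (a i) b) (C.lowerTrace δ b) + 1, fun m hm => ⟨hb', ?_, subset_rfl⟩⟩
    simpa only [Nat.le_zero.1 hm] using hosc
  | succ n ih =>
    obtain ⟨a, ha, hle, b, c, h⟩ := ih
    obtain ⟨hbn, osc_n, -⟩ := h n le_rfl
    obtain ⟨a', ha', b', hb', hle', hosc, hsubset, hweight⟩ :=
      hδ.exists_hasOscAbove_succ ha hbn hle osc_n.lt_right osc_n.osc_eq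
    refine ⟨a', ha', hle', Function.update b (n + 1) b', c, fun m hm => ?_⟩
    rw [Function.update_self]
    rcases hm.eq_or_lt with rfl | hlt
    · rw [Function.update_self]
      exact ⟨hb', hosc, subset_rfl⟩
    · rw [Function.update_of_ne hlt.ne]
      obtain ⟨hbm, osc_m, subset_m⟩ := h m (Nat.lt_succ_iff.1 hlt)
      exact ⟨hbm, osc_m.congr fun i x hx => hweight i x (subset_m hx), subset_m.trans hsubset⟩

end IsReflecting

/-- Above a reflecting point `δ` the oscillation can be raised one by one. Then `a` is replaced by
a tuple `a'` below `δ`, which continues all the walks from the `b m` by the same lower trace. -/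
theorem exists_forall_oscillation_eq [Finite ι] [∀ a : Ω, Countable (Iio a)] [Uncountable Ω]
    (C : CSequence Ω) (hA : ∀ ζ, ∃ a ∈ A, ∀ i, ζ < a i) (hB : ∀ ζ, ∃ b ∈ B, ζ < b) (n : ℕ) :
    ∃ a ∈ A, ∃ b : ℕ → Ω, ∀ m ≤ n, b m ∈ B ∧
      ∀ i, a i < b m ∧ C.oscillation (a i) (b m) = C.oscillation (a i) (b 0) + m := by
  obtain ⟨δ, hδ⟩ := C.exists_isReflecting A B
  obtain ⟨a₀, ha₀, hlt₀⟩ := hA δ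
  obtain ⟨a, ha, hle, b, c, h⟩ :=
    hδ.exists_forall_hasOscAbove ⟨a₀, ha₀, fun i => (hlt₀ i).le⟩ (hB δ) n
  obtain ⟨μ, hμ, trace_lt, weight_eq⟩ := C.exists_mem_ladder_weight_eq hδ.isSuccLimit
    (C.lowerTrace δ (b n)).finite_toSet (fun x => C.lt_of_mem_lowerTrace hδ.isSuccLimit.bot_lt)
    (a := fun m : Iic n => b m) (fun m => (h m m.2).2.1.lt_right.le)
    (h 0 n.zero_le).2.1.lt_right.le
  obtain ⟨a', ha', ha'δ⟩ := hδ.exists_lt μ (C.lt_of_mem hμ) a ha hle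
  have bot_lt (i) : ⊥ < a' i := bot_le.trans_lt (ha'δ i).1
  have new_trace (i) (x) (hx : x ∈ C.lowerTrace (a' i) δ) : μ ≤ x ∧ x < δ :=
    ⟨C.le_of_mem_lowerTrace_of_mem hμ (ha'δ i).1 (ha'δ i).2.1 hx,
      (C.lt_of_mem_lowerTrace (bot_lt i) hx).trans (ha'δ i).2.1⟩
  have oscillation_eq (m) (hm : m ≤ n) (i) : C.oscillation (a' i) (b m) =
      c i + m + osc (C.Heavier (a' i) (b 0)) (C.lowerTrace (a' i) δ) := by
    obtain ⟨-, osc_m, subset_m⟩ := h m hm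
    have old_lt (x) (hx : x ∈ C.lowerTrace δ (b m)) : x < μ := trace_lt x (subset_m hx)
    rw [osc_m.oscillation_eq (i := i) (bot_lt i) (ha'δ i).2.1
        (fun x hx y hy => (old_lt x hx).trans_le (new_trace i y hy).1)
        (fun x hx => C.node_eq_iff.1 (ha'δ i).2.2 x (old_lt x hx)),
      osc_congr fun x hx => heavier_congr rfl
        (weight_eq ⟨m, hm⟩ x (new_trace i x hx).1 (new_trace i x hx).2)]
  refine ⟨a', ha', b, fun m hm => ⟨(h m hm).1, fun i => ⟨?_, ?_⟩⟩⟩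
  · exact (ha'δ i).2.1.trans (h m hm).2.1.lt_right
  · rw [oscillation_eq m hm, oscillation_eq 0 n.zero_le]
    ring

theorem exists_finset_forall_oscillation_eq [∀ a : Ω, Countable (Iio a)] [Uncountable Ω]
    (C : CSequence Ω) {𝒜 : Set (Finset Ω)} {k : ℕ} (hcard : ∀ F ∈ 𝒜, F.card = k)
    (h𝒜 : ∀ ζ, ∃ F ∈ 𝒜, ∀ α ∈ F, ζ < α) (hB : ∀ ζ, ∃ b ∈ B, ζ < b) (n : ℕ) :
    ∃ F ∈ 𝒜, ∃ b : ℕ → Ω, ∀ m ≤ n, b m ∈ B ∧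
      ∀ α ∈ F, α < b m ∧ C.oscillation α (b m) = C.oscillation α (b 0) + m := by
  have unbounded (ζ : Ω) : ∃ a : Fin k → Ω, (∃ F ∈ 𝒜, range a = F) ∧ ∀ i, ζ < a i := by
    obtain ⟨F, hF, hlt⟩ := h𝒜 ζ
    have range_eq := F.range_orderEmbOfFin (hcard F hF)
    exact ⟨F.orderEmbOfFin (hcard F hF), ⟨F, hF, range_eq⟩,
      fun i => hlt _ (range_eq.le (mem_range_self i))⟩
  obtain ⟨a, ⟨F, hF, range_eq⟩, b, hb⟩ := C.exists_forall_oscillation_eq unbounded hB n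
  refine ⟨F, hF, b, fun m hm => ⟨(hb m hm).1, fun α hα => ?_⟩⟩
  obtain ⟨i, rfl⟩ := range_eq.ge hα
  exact (hb m hm).2 i

end CSequence

/-! ### Kronecker's theorem -/

section Kronecker

open UnitAddTorus

variable {d : Type*} {p : UnitAddTorus d}

section Fintype

variable [Fintype d]

theorem mFourier_apply_eq_toCircle (n : d → ℤ) (x : UnitAddTorus d) :
    mFourier n x = AddCircle.toCircle (∑ i, n i • x i) := by
  calc mFourier n x = ((∏ i, AddCircle.toCircle (n i • x i) : Circle) : ℂ) :=
        (map_prod Circle.coeHom (fun i => AddCircle.toCircle (n i • x i)) Finset.univ).symm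
    _ = AddCircle.toCircle (∑ i, n i • x i) := by
      exact congrArg _ (map_sum AddCircle.toCircle_addChar.toAddMonoidHom _ _).symm

theorem mFourier_add_apply (n : d → ℤ) (x y : UnitAddTorus d) :
    mFourier n (x + y) = mFourier n x * mFourier n y := by
  simp only [mFourier_apply_eq_toCircle, Pi.add_apply, smul_add, Finset.sum_add_distrib,
    AddCircle.toCircle_add, Circle.coe_mul]

theorem mFourier_ne_one (hp : LinearIndependent ℤ p) {n : d → ℤ} (hn : n ≠ 0) :
    mFourier n p ≠ 1 := by
  rw [mFourier_apply_eq_toCircle, Ne, Circle.coe_eq_one, ← AddCircle.toCircle_zero,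
    (AddCircle.injective_toCircle one_ne_zero).eq_iff]
  exact fun h => hn (funext (Fintype.linearIndependent_iff.1 hp n h))

theorem integral_mFourier_eq_zero (hp : LinearIndependent ℤ p) {μ : Measure (UnitAddTorus d)}
    (hμ : MeasurePreserving (p + ·) μ μ) {n : d → ℤ} (hn : n ≠ 0) : ∫ x, mFourier n x ∂μ = 0 := by
  have invariant : mFourier n p * ∫ x, mFourier n x ∂μ = ∫ x, mFourier n x ∂μ := by
    simp only [← integral_const_mul, ← mFourier_add_apply]
    exact hμ.integral_comp (measurableEmbedding_addLeft p) (mFourier n)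
  exact by_contra fun hne => mFourier_ne_one hp hn ((mul_eq_right₀ hne).1 invariant)

end Fintype

variable [Finite d]

theorem eq_of_measurePreserving_add_left (hp : LinearIndependent ℤ p)
    {μ ν : Measure (UnitAddTorus d)} [IsProbabilityMeasure μ] [IsProbabilityMeasure ν]
    (hμ : MeasurePreserving (p + ·) μ μ) (hν : MeasurePreserving (p + ·) ν ν) : μ = ν := by
  cases nonempty_fintype d
  let A := (mFourierSubalgebra d).comap
    (BoundedContinuousFunction.toContinuousMapStarₐ (α := UnitAddTorus d) ℂ)
  have A_separatesPoints : (A.map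
      (BoundedContinuousFunction.toContinuousMapStarₐ ℂ)).SeparatesPoints := by
    intro x y hxy
    obtain ⟨_, ⟨f, hf, rfl⟩, hne⟩ := mFourierSubalgebra_separatesPoints hxy
    exact ⟨f, ⟨_, ⟨BoundedContinuousFunction.mkOfCompact f, hf, rfl⟩, rfl⟩, hne⟩
  refine ext_of_forall_mem_subalgebra_integral_eq_of_polish A_separatesPoints fun g hg => ?_
  have mem_span : g.toContinuousMap ∈ Submodule.span ℂ (range (mFourier (d := d))) := by
    rw [← mFourierSubalgebra_coe]
    exact hg
  have integral_eq (f : C(UnitAddTorus d, ℂ)) (hf : f ∈ Submodule.span ℂ (range mFourier)) :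
      ∫ x, f x ∂μ = ∫ x, f x ∂ν := by
    induction hf using Submodule.span_induction with
    | mem f hf =>
      obtain ⟨n, rfl⟩ := hf
      rcases eq_or_ne n 0 with rfl | hn
      · simp [mFourier_zero]
      · rw [integral_mFourier_eq_zero hp hμ hn, integral_mFourier_eq_zero hp hν hn]
    | zero => simp
    | add f g _ _ hf hg =>
      have integrable (h : C(UnitAddTorus d, ℂ)) (κ : Measure (UnitAddTorus d))
          [IsProbabilityMeasure κ] : Integrable h κ := h.continuous.integrable_of_hasCompactSupport
            (HasCompactSupport.of_compactSpace h)
      simp only [ContinuousMap.add_apply]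
      rw [integral_add (integrable f μ) (integrable g μ), hf, hg,
        integral_add (integrable f ν) (integrable g ν)]
    | smul c f _ hf => simp [integral_const_mul, hf]
  exact integral_eq _ mem_span

theorem denseRange_nsmul (hp : LinearIndependent ℤ p) : DenseRange fun m : ℕ => m • p := by
  let H := (AddSubgroup.zmultiples p).topologicalClosure
  have isClosed_H : IsClosed (H : Set (UnitAddTorus d)) :=
    (AddSubgroup.zmultiples p).isClosed_topologicalClosure
  have : CompactSpace H := isCompact_iff_compactSpace.1 isClosed_H.isCompact
  let q : H := ⟨p, subset_closure (AddSubgroup.mem_zmultiples p)⟩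
  let haar : Measure H := Measure.addHaarMeasure ⊤
  let ν : Measure (UnitAddTorus d) := Measure.addHaarMeasure ⊤
  have : IsProbabilityMeasure haar := ⟨Measure.addHaarMeasure_self⟩
  have : IsProbabilityMeasure ν := ⟨Measure.addHaarMeasure_self⟩
  have map_haar : MeasurePreserving Subtype.val haar (haar.map Subtype.val) :=
    ⟨measurable_subtype_coe, rfl⟩
  have : IsProbabilityMeasure (haar.map Subtype.val) :=
    Measure.isProbabilityMeasure_map measurable_subtype_coe.aemeasurable
  have haar_eq : haar.map Subtype.val = ν :=
    eq_of_measurePreserving_add_left hp (map_haar.of_semiconj (measurePreserving_add_left haar q)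
      (fun _ => rfl) (measurable_const_add p)) (measurePreserving_add_left ν p)
  have H_eq_univ : (H : Set (UnitAddTorus d)) = univ := by
    rw [← isClosed_H.ae_eq_univ_iff_eq (μ := ν), ← haar_eq, eventuallyEq_univ, mem_ae_map_iff
      measurable_subtype_coe.aemeasurable isClosed_H.measurableSet]
    exact Eventually.of_forall Subtype.property
  exact denseRange_zsmul_iff_nsmul.1 (dense_iff_closure_eq.2 H_eq_univ)

theorem exists_forall_exists_le_dist_lt {X : Type*} [PseudoMetricSpace X] [CompactSpace X]
    {u : ℕ → X} (hu : DenseRange u) {ε : ℝ} (hε : 0 < ε) :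
    ∃ N, ∀ x, ∃ m ≤ N, dist (u m) x < ε := by
  let U (N : ℕ) : Set X := ⋃ m ≤ N, Metric.ball (u m) ε
  have isOpen_U (N : ℕ) : IsOpen (U N) := isOpen_biUnion fun m _ => Metric.isOpen_ball
  have U_mono : Monotone U := fun N M hNM =>
    biUnion_subset_biUnion_left fun m (hm : m ≤ N) => hm.trans hNM
  have U_cover : univ ⊆ ⋃ N, U N := fun x _ => by
    obtain ⟨m, hm⟩ := hu.exists_dist_lt x hε
    exact mem_iUnion.2 ⟨m, mem_biUnion (le_refl m) hm⟩
  obtain ⟨N, hN⟩ := isCompact_univ.elim_directed_cover U isOpen_U U_cover U_mono.directed_le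
  refine ⟨N, fun x => ?_⟩
  obtain ⟨m, hm, hx⟩ := mem_iUnion₂.1 (hN (mem_univ x))
  exact ⟨m, hm, Metric.mem_ball'.1 hx⟩

theorem exists_forall_exists_le_dist_nsmul_lt {ι : Type*} [Finite ι] {p : ι → UnitAddCircle}
    (hp : LinearIndependent ℤ p) {ε : ℝ} (hε : 0 < ε) :
    ∃ N, ∀ w : ι → UnitAddCircle, ∃ m : ℕ, m ≤ N ∧ ∀ i, dist (m • p i) (w i) < ε := by
  cases nonempty_fintype ι
  obtain ⟨N, hN⟩ := exists_forall_exists_le_dist_lt (denseRange_nsmul hp) hε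
  refine ⟨N, fun w => ?_⟩
  obtain ⟨m, hm, hdist⟩ := hN w
  exact ⟨m, hm, (dist_pi_lt_iff hε).1 hdist⟩

theorem linearIndependent_coe_unitAddCircle {κ : Type*} {v : κ → ℝ} (hv : LinearIndependent ℚ v)
    {k : κ} (hk : v k = 1) :
    LinearIndependent ℤ fun i : ({k}ᶜ : Set κ) => (v i : UnitAddCircle) := by
  have hvℤ : LinearIndependent ℤ v := hv.restrict_scalars' ℤ
  let coe : ℝ →ₗ[ℤ] UnitAddCircle := (QuotientAddGroup.mk' _).toIntLinearMap
  refine (hvℤ.comp _ Subtype.val_injective).map (f := coe) ?_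
  have ker_coe : coe.ker = Submodule.span ℤ (v '' {k}) := by
    rw [image_singleton, hk]
    ext x
    exact (QuotientAddGroup.eq_zero_iff x).trans
      (AddSubgroup.mem_zmultiples_iff.trans Submodule.mem_span_singleton.symm)
  rw [ker_coe, range_comp, Subtype.range_coe]
  exact hvℤ.disjoint_span_image disjoint_compl_left

open Cardinal in
theorem exists_linearIndependent_unitAddCircle {Ω : Type*} (hΩ : #Ω ≤ 𝔠) :
    ∃ z : Ω → UnitAddCircle, LinearIndependent ℤ z := by
  have one_independent : LinearIndepOn ℚ id ({1} : Set ℝ) := .singleton one_ne_zero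
  let b := Module.Basis.extend one_independent
  let k : one_independent.extend (subset_univ _) := ⟨1, one_independent.subset_extend _ rfl⟩
  have mk_eq : #(one_independent.extend (subset_univ _)) = 𝔠 := by
    rw [← Real.rank_rat_real, b.mk_eq_rank'']
  have : Infinite (one_independent.extend (subset_univ _)) := by
    rw [infinite_iff, mk_eq]
    exact aleph0_le_continuum
  have mk_compl : #({k}ᶜ : Set (one_independent.extend (subset_univ _))) = 𝔠 := by
    rw [mk_compl_of_infinite _ ((mk_singleton k).trans_lt
      (one_lt_aleph0.trans_le (aleph0_le_mk _))), mk_eq]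
  obtain ⟨e⟩ := lift_mk_le'.1 (show lift #Ω ≤ lift #({k}ᶜ : Set _) by
    rwa [mk_compl, lift_continuum, lift_le_continuum])
  exact ⟨_, (linearIndependent_coe_unitAddCircle b.linearIndependent
    (Module.Basis.extend_apply_self one_independent k)).comp e e.injective⟩

end Kronecker

/-! ### Uncountable sets -/

section Uncountable

variable {X Y Ω : Type*} {s t : Set X}

theorem exists_not_countable_fiber [Countable Y] (hs : ¬s.Countable) (f : X → Y) :
    ∃ y, ¬{x ∈ s | f x = y}.Countable := by
  by_contra! h
  refine hs ((countable_iUnion h).mono fun x hx => ?_)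
  exact mem_iUnion.2 ⟨f x, hx, rfl⟩

theorem exists_subset_not_countable_dist_lt [PseudoMetricSpace Y]
    [TopologicalSpace.SeparableSpace Y] (hs : ¬s.Countable) (f : X → Y) {ε : ℝ} (hε : 0 < ε) :
    ∃ t ⊆ s, ¬t.Countable ∧ ∀ x ∈ t, ∀ y ∈ t, dist (f x) (f y) < ε := by
  obtain ⟨D, D_countable, D_dense⟩ := TopologicalSpace.exists_countable_dense Y
  have : Countable D := D_countable
  choose d hdD hd using fun x => D_dense.exists_dist_lt (f x) (half_pos hε)
  obtain ⟨y, hy⟩ := exists_not_countable_fiber hs fun x => (⟨d x, hdD x⟩ : D)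
  refine ⟨_, sep_subset _ _, hy, fun x hx x' hx' => ?_⟩
  have d_eq : d x = d x' := congrArg Subtype.val (hx.2.trans hx'.2.symm)
  exact (dist_triangle_right _ _ (d x)).trans_lt
    (add_halves ε ▸ add_lt_add (hd x) (d_eq ▸ hd x'))

/-- A weak form of the Δ-system lemma. -/
theorem exists_subset_not_countable_root {a : X → Finset Ω} {k : ℕ} (hs : ¬s.Countable)
    (hcard : ∀ x ∈ s, (a x).card = k) : ∃ t ⊆ s, ¬t.Countable ∧ ∃ r : Finset Ω,
      (∀ x ∈ t, r ⊆ a x) ∧ ∀ α ∉ r, {x ∈ t | α ∈ a x}.Countable := by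
  classical
  induction k generalizing s a with
  | zero =>
    refine ⟨s, subset_rfl, hs, ∅, fun x _ => (a x).empty_subset, fun α _ => ?_⟩
    refine countable_empty.mono fun x hx => ?_
    exact Finset.card_ne_zero_of_mem hx.2 (hcard x hx.1)
  | succ k ih =>
    by_cases h : ∀ α, {x ∈ s | α ∈ a x}.Countable
    · exact ⟨s, subset_rfl, hs, ∅, fun x _ => (a x).empty_subset, fun α _ => h α⟩
    obtain ⟨α, hα⟩ := not_forall.1 h
    obtain ⟨t, hts, ht, r, hr, hr_max⟩ := ih (a := fun x => (a x).erase α) hα fun x hx => by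
      rw [Finset.card_erase_of_mem hx.2, hcard x hx.1, Nat.add_sub_cancel]
    refine ⟨t, hts.trans (sep_subset _ _), ht, insert α r, fun x hx => ?_, fun β hβ => ?_⟩
    · exact Finset.insert_subset (hts hx).2 ((hr x hx).trans (Finset.erase_subset α (a x)))
    · rw [Finset.mem_insert, not_or] at hβ
      refine (hr_max β hβ.2).mono fun x hx => ?_
      exact ⟨hx.1, Finset.mem_erase.2 ⟨hβ.1, hx.2⟩⟩

theorem exists_forall_mem_sdiff_lt [LinearOrder Ω] [∀ a : Ω, Countable (Iio a)]
    {a : X → Finset Ω} {r : Finset Ω} (ht : ¬t.Countable)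
    (hr : ∀ α ∉ r, {x ∈ t | α ∈ a x}.Countable) (ζ : Ω) : ∃ x ∈ t, ∀ α ∈ a x \ r, ζ < α := by
  by_contra! h
  refine ht (((countable_Iic ζ).mono (sep_subset (Iic ζ) (· ∉ r))).biUnion
    (fun α hα => hr α hα.2) |>.mono fun x hx => ?_)
  obtain ⟨α, hα, hle⟩ := h x hx
  rw [Finset.mem_sdiff] at hα
  exact mem_biUnion (x := α) ⟨hle, hα.2⟩ ⟨hx, hα.1⟩

end Uncountable

/-! ### The space -/

section Lindelof

variable {X : Type*} [LinearOrder X]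

/-- The points of `s` chosen by going through `s` in increasing order and choosing the points
which do not lie in `V x` for any point `x` chosen before. -/
def Greedy [WellFoundedLT X] (s : Set X) (V : X → Set X) (y : X) : Prop :=
  y ∈ s ∧ ∀ x, (_ : x < y) → Greedy s V x → y ∉ V x
termination_by wellFounded_lt.wrap y

variable [WellFoundedLT X]

theorem greedy_iff {s : Set X} {V : X → Set X} {y : X} :
    Greedy s V y ↔ y ∈ s ∧ ∀ x < y, Greedy s V x → y ∉ V x := by
  rw [Greedy]

theorem exists_greedy_mem {s : Set X} {V : X → Set X} (hV : ∀ x ∈ s, x ∈ V x) {y : X}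
    (hy : y ∈ s) : ∃ x, Greedy s V x ∧ y ∈ V x := by
  by_cases h : Greedy s V y
  · exact ⟨y, h, hV y hy⟩
  · rw [greedy_iff] at h
    push Not at h
    obtain ⟨x, -, hx, hyx⟩ := h hy
    exact ⟨x, hx, hyx⟩

theorem hereditarilyLindelofSpace_of_exists_lt_mem [TopologicalSpace X]
    (h : ∀ s : Set X, ¬s.Countable → ∀ V : X → Set X, (∀ x ∈ s, V x ∈ 𝓝 x) →
      ∃ x ∈ s, ∃ y ∈ s, x < y ∧ y ∈ V x) : HereditarilyLindelofSpace X := by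
  refine ⟨fun s _ => isLindelof_iff_countable_subcover.2 fun {ι} U hU hsU => ?_⟩
  choose i hi using fun x : s => mem_iUnion.1 (hsU x.2)
  let V (x : X) : Set X := ⋃ hx : x ∈ s, U (i ⟨x, hx⟩)
  have V_eq {x : X} (hx : x ∈ s) : V x = U (i ⟨x, hx⟩) := by simp only [V, hx, iUnion_true]
  have greedy_countable : {x | Greedy s V x}.Countable := by
    by_contra hcon
    obtain ⟨x, hx, y, hy, hxy, hyx⟩ := h _ hcon V fun x hx =>
      have hxs := (greedy_iff.1 hx).1
      V_eq hxs ▸ (hU _).mem_nhds (hi ⟨x, hxs⟩)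
    exact (greedy_iff.1 hy).2 x hxy hx hyx
  refine ⟨i '' (Subtype.val ⁻¹' {x | Greedy s V x}),
    (greedy_countable.preimage Subtype.val_injective).image i, fun y hy => ?_⟩
  obtain ⟨x, hx, hyx⟩ := exists_greedy_mem (V := V) (fun x hx => V_eq hx ▸ hi ⟨x, hx⟩) hy
  have hxs : x ∈ s := (greedy_iff.1 hx).1
  exact mem_biUnion (x := i ⟨x, hxs⟩) ⟨⟨x, hxs⟩, hx, rfl⟩ (V_eq hxs ▸ hyx)

end Lindelof

theorem exists_finset_forall_dist_lt_of_mem_nhds {ι E : Type*} [PseudoMetricSpace E] {f : ι → E}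
    {V : Set (ι → E)} (hV : V ∈ 𝓝 f) :
    ∃ (F : Finset ι) (ε : ℝ), 0 < ε ∧ ∀ g : ι → E, (∀ i ∈ F, dist (g i) (f i) < ε) → g ∈ V := by
  rw [nhds_pi] at hV
  obtain ⟨⟨I, ε⟩, ⟨hI, hε⟩, hsub⟩ := (hasBasis_pi_same_index (fun i =>
    Metric.nhds_basis_ball (x := f i)) fun J k hJ hk => by
      obtain ⟨ε, hε, hlt⟩ := (eventually_mem_nhdsWithin.and <| (eventually_all_finite hJ).2
        fun i hi => Ioo_mem_nhdsGT (hk i hi)).exists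
      exact ⟨ε, hε, fun i hi => Metric.ball_subset_ball (hlt i hi).2.le⟩).mem_iff.1 hV
  exact ⟨hI.toFinset, ε, hε, fun g hg => hsub fun i hi => hg i (hI.mem_toFinset.2 hi)⟩

namespace CSequence

variable {Ω G : Type*} [LinearOrder Ω] [WellFoundedLT Ω] [OrderBot Ω] (C : CSequence Ω)

open Classical in
/-- The function `Ω → G` associated with `β` in Moore's construction, for a family `z` in `G`. The
`+ 1` makes its values below `β` nonzero when `z` is independent. -/
noncomputable def point [AddMonoid G] (z : Ω → G) (β α : Ω) : G :=
  if α < β then (C.oscillation α β + 1) • z α else 0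

section Point

variable [AddMonoid G] (z : Ω → G) {α β : Ω}

theorem point_of_lt (h : α < β) : C.point z β α = (C.oscillation α β + 1) • z α := if_pos h

theorem point_of_le (h : β ≤ α) : C.point z β α = 0 := if_neg h.not_gt

end Point

theorem exists_forall_dist_point_lt [∀ a : Ω, Countable (Iio a)] [Uncountable Ω]
    [SeminormedAddCommGroup G] (z : Ω → G) {𝒜 : Set (Finset Ω)} {B : Set Ω} {k N : ℕ} {ε : ℝ}
    (hcard : ∀ F ∈ 𝒜, F.card = k) (h𝒜 : ∀ ζ, ∃ F ∈ 𝒜, ∀ α ∈ F, ζ < α)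
    (hB : ∀ ζ, ∃ b ∈ B, ζ < b)
    (hN : ∀ F ∈ 𝒜, ∀ w : Ω → G, ∃ m ≤ N, ∀ α ∈ F, dist (m • z α) (w α) < ε) :
    ∃ F ∈ 𝒜, ∀ w : Ω → G, ∃ b ∈ B, ∀ α ∈ F, α < b ∧ dist (C.point z b α) (w α) < ε := by
  obtain ⟨F, hF, b, hb⟩ := C.exists_finset_forall_oscillation_eq hcard h𝒜 hB N
  refine ⟨F, hF, fun w => ?_⟩
  obtain ⟨m, hm, hdist⟩ := hN F hF fun α => w α - (C.oscillation α (b 0) + 1) • z α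
  obtain ⟨hbm, hosc⟩ := hb m hm
  refine ⟨b m, hbm, fun α hα => ⟨(hosc α hα).1, ?_⟩⟩
  rw [C.point_of_lt z (hosc α hα).1, (hosc α hα).2, add_right_comm, add_smul, add_comm,
    dist_eq_norm, ← sub_sub_eq_add_sub, ← dist_eq_norm]
  exact hdist α hα

section Circle

variable {z : Ω → UnitAddCircle}

theorem point_ne_zero (hz : LinearIndependent ℤ z) {α β : Ω} (h : α < β) :
    C.point z β α ≠ 0 := by
  rw [C.point_of_lt z h, ← natCast_zsmul]
  intro h
  have single_eq_zero := linearIndependent_iff.1 hz (Finsupp.single α _)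
    ((Finsupp.linearCombination_single ℤ _ α).trans h)
  exact Nat.succ_ne_zero _ (Nat.cast_eq_zero.1 (Finsupp.single_eq_zero.1 single_eq_zero))

theorem point_injective (hz : LinearIndependent ℤ z) : Function.Injective (C.point z) := by
  refine .of_lt_imp_ne fun x y hxy h => C.point_ne_zero hz hxy ?_
  rw [← h, C.point_of_le z le_rfl]

variable [∀ a : Ω, Countable (Iio a)] [Uncountable Ω]

theorem exists_lt_forall_dist_point_lt_of_card (hz : LinearIndependent ℤ z) {s : Set Ω}
    (hs : ¬s.Countable) {a : Ω → Finset Ω} {k : ℕ} (hcard : ∀ x ∈ s, (a x).card = k)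
    (hmem : ∀ x ∈ s, x ∈ a x) {ε : ℝ} (hε : 0 < ε) :
    ∃ x ∈ s, ∃ y ∈ s, x < y ∧ ∀ α ∈ a x, dist (C.point z y α) (C.point z x α) < ε := by
  obtain ⟨t, hts, ht, r, hr, hr_max⟩ := exists_subset_not_countable_root hs hcard
  have htr : ¬(t \ r).Countable := fun h => ht <| (h.union r.countable_toSet).mono <|
    subset_sdiff_union t r
  choose N hN using fun x => exists_forall_exists_le_dist_nsmul_lt
    (hz.comp (Subtype.val : a x → Ω) Subtype.val_injective) hε
  obtain ⟨n, hn⟩ := exists_not_countable_fiber htr N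
  obtain ⟨u, hu, u_uncountable, hdist⟩ := exists_subset_not_countable_dist_lt hn
    (fun x (α : r) => C.point z x α) hε
  have unbounded := exists_forall_mem_sdiff_lt (a := a) u_uncountable fun α hα =>
    (hr_max α hα).mono (inter_subset_inter_left _ fun x hx => (hu hx).1.1)
  have mem_sdiff : ∀ x ∈ u, x ∈ a x \ r := fun x hx =>
    Finset.mem_sdiff.2 ⟨hmem x (hts (hu hx).1.1), (hu hx).1.2⟩
  obtain ⟨_, ⟨x, hx, rfl⟩, approx⟩ := C.exists_forall_dist_point_lt z
    (𝒜 := (fun x => a x \ r) '' u) (B := u) (k := k - r.card) (N := n) (ε := ε)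
    (forall_mem_image.2 fun x hx => by
      rw [Finset.card_sdiff_of_subset (hr x (hu hx).1.1), hcard x (hts (hu hx).1.1)])
    (fun ζ => exists_mem_image.2 (unbounded ζ))
    (fun ζ => (unbounded ζ).imp fun x hx => ⟨hx.1, hx.2 x (mem_sdiff x hx.1)⟩)
    (forall_mem_image.2 fun x hx (w : Ω → UnitAddCircle) => by
      obtain ⟨m, hm, h⟩ := hN x fun α => w α
      exact ⟨m, hm.trans_eq (hu hx).2, fun α hα => h ⟨α, (Finset.mem_sdiff.1 hα).1⟩⟩)
  obtain ⟨y, hy, hxy⟩ := approx (C.point z x)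
  refine ⟨x, hts (hu hx).1.1, y, hts (hu hy).1.1, (hxy x (mem_sdiff x hx)).1, fun α hα => ?_⟩
  by_cases hαr : α ∈ r
  · exact (dist_le_pi_dist _ _ (⟨α, hαr⟩ : r)).trans_lt (hdist y hy x hx)
  · exact (hxy α (Finset.mem_sdiff.2 ⟨hα, hαr⟩)).2

theorem exists_lt_forall_dist_point_lt (hz : LinearIndependent ℤ z) {s : Set Ω}
    (hs : ¬s.Countable) (a : Ω → Finset Ω) {ε : Ω → ℝ} (hε : ∀ x ∈ s, 0 < ε x) :
    ∃ x ∈ s, ∃ y ∈ s, x < y ∧ ∀ α ∈ a x, dist (C.point z y α) (C.point z x α) < ε x := by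
  choose! n hn using fun x hx => exists_nat_one_div_lt (hε x hx)
  obtain ⟨⟨k, m⟩, hkm⟩ := exists_not_countable_fiber hs fun x => ((insert x (a x)).card, n x)
  obtain ⟨x, hx, y, hy, hxy, hdist⟩ := C.exists_lt_forall_dist_point_lt_of_card hz hkm
    (a := fun x => insert x (a x)) (fun x hx => congrArg Prod.fst hx.2)
    (fun x _ => Finset.mem_insert_self x (a x)) (Nat.one_div_pos_of_nat (n := m))
  refine ⟨x, hx.1, y, hy.1, hxy, fun α hα => (hdist α (Finset.mem_insert_of_mem hα)).trans ?_⟩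
  have n_eq : n x = m := congrArg Prod.snd hx.2
  exact n_eq ▸ hn x hx.1

theorem hereditarilyLindelofSpace_of_isInducing [TopologicalSpace Ω]
    (hz : LinearIndependent ℤ z) (h : IsInducing (C.point z)) : HereditarilyLindelofSpace Ω := by
  refine hereditarilyLindelofSpace_of_exists_lt_mem fun s hs V hV => ?_
  have exists_approx (x) (hx : x ∈ s) : ∃ (F : Finset Ω) (ε : ℝ), 0 < ε ∧
      ∀ y, (∀ α ∈ F, dist (C.point z y α) (C.point z x α) < ε) → y ∈ V x := by
    obtain ⟨W, hW, hWV⟩ := mem_comap.1 (h.nhds_eq_comap x ▸ hV x hx)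
    obtain ⟨F, ε, hε, hF⟩ := exists_finset_forall_dist_lt_of_mem_nhds hW
    exact ⟨F, ε, hε, fun y hy => hWV (hF _ hy)⟩
  choose! F ε hε hF using exists_approx
  obtain ⟨x, hx, y, hy, hxy, hdist⟩ := C.exists_lt_forall_dist_point_lt hz hs F hε
  exact ⟨x, hx, y, hy, hxy, hF x hx y hdist⟩

theorem not_separableSpace_of_isInducing [TopologicalSpace Ω]
    (hz : LinearIndependent ℤ z) (h : IsInducing (C.point z)) :
    ¬TopologicalSpace.SeparableSpace Ω := by
  rintro ⟨D, D_countable, D_dense⟩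
  obtain ⟨α, hα⟩ := exists_forall_lt_of_countable D_countable
  obtain ⟨β, hβ⟩ := exists_forall_lt_of_countable (countable_singleton α)
  have isOpen_ne : IsOpen {x | C.point z x α ≠ 0} :=
    isOpen_ne_fun ((continuous_apply α).comp h.continuous) continuous_const
  obtain ⟨x, hx, hxD⟩ := D_dense.inter_open_nonempty _ isOpen_ne
    ⟨β, C.point_ne_zero hz (hβ α rfl)⟩
  exact hx (C.point_of_le z (hα x hxD).le)

end Circle

end CSequence

/-! ### The first uncountable ordinal -/

/-- The first uncountable ordinal as a well-ordered type. -/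
abbrev OmegaOne : Type := (Cardinal.aleph 1).ord.ToType

namespace OmegaOne

theorem mk_eq : Cardinal.mk OmegaOne = Cardinal.aleph 1 := Cardinal.mk_ord_toType _

instance : Uncountable OmegaOne :=
  Cardinal.aleph0_lt_mk_iff.1 (Cardinal.aleph0_lt_aleph_one.trans_eq mk_eq.symm)

instance (a : OmegaOne) : Countable (Iio a) :=
  Cardinal.mk_le_aleph0_iff.1 <| Cardinal.lt_aleph_one_iff.1 <|
    (Cardinal.mk_Iio_lt a (by rw [mk_eq, Ordinal.type_toType])).trans_eq mk_eq

noncomputable instance : OrderBot OmegaOne := WellFoundedLT.toOrderBot OmegaOne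

end OmegaOne

end LSpace

/-- **Theorem (Moore).** There exists a regular Hausdorff topological space which
is hereditarily Lindelöf and not separable (an L space). -/
theorem statement2 :
    ∃ (X : Type) (t : TopologicalSpace X),
      @T2Space X t ∧ @RegularSpace X t ∧ @HereditarilyLindelofSpace X t ∧
        ¬ @TopologicalSpace.SeparableSpace X t := by
  obtain ⟨C⟩ := LSpace.nonempty_cSequence (Ω := LSpace.OmegaOne)
  obtain ⟨z, hz⟩ := LSpace.exists_linearIndependent_unitAddCircle
    (LSpace.OmegaOne.mk_eq.trans_le Cardinal.aleph_one_le_continuum)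
  let : TopologicalSpace LSpace.OmegaOne := .induced (C.point z) inferInstance
  have inducing : IsInducing (C.point z) := ⟨rfl⟩
  have embedding : IsEmbedding (C.point z) := ⟨inducing, C.point_injective hz⟩
  exact ⟨LSpace.OmegaOne, inferInstance, embedding.t2Space, inducing.regularSpace,
    C.hereditarilyLindelofSpace_of_isInducing hz inducing,
    C.not_separableSpace_of_isInducing hz inducing⟩
end
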